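/- Let A be a dg algebra with enough idempotents. The canonical localization functor q : H(A) → D(A) from the homotopy category to the derived category has both a left adjoint Π : D(A) → H(A) and a right adjoint Υ : D(A) → H(A), both of which are triangulated and fully faithful. The essential image of Π consists of homotopically projective dg modules (those P with Hom_{H(A)}(P, N) = 0 for all acyclic N) and the essential image of Υ consists of homotopically injective dg modules (those I with Hom_{H(A)}(N, I) = 0 for all acyclic N). -/

import Mathlib

open DirectSum

noncomputable section

/-- The Koszul sign `(-1)^n` for an integer `n`. -/
def sgn (n : ℤ) : ℤ := ((-1 : ℤˣ) ^ n : ℤˣ)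

/-- A differential graded algebra with enough idempotents over the commutative
ground ring `K`:  a (possibly non-unital) associative `K`-algebra with a
`ℤ`-grading (given by an internal direct sum of `K`-submodules), a distinguished
family of nonzero orthogonal homogeneous idempotents of degree `0` such that
`A = ⊕ eᵢA = ⊕ Aeᵢ`, and a square-zero differential of degree `+1` which kills
the distinguished idempotents and satisfies the graded Leibniz rule. -/
structure DGAlgebra (K : Type) [CommRing K] : Type 1 where
  carrier : Type
  [ring : NonUnitalRing carrier]
  [mod : Module K carrier]
  [smulComm : SMulCommClass K carrier carrier]
  [tower : IsScalarTower K carrier carrier]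
  deg : ℤ → Submodule K carrier
  internal : DirectSum.IsInternal deg
  mul_mem : ∀ {i j : ℤ} {a b : carrier}, a ∈ deg i → b ∈ deg j → a * b ∈ deg (i + j)
  ι : Type
  [decEq : DecidableEq ι]
  e : ι → carrier
  e_ne : ∀ i, e i ≠ 0
  e_idem : ∀ i, e i * e i = e i
  e_orth : ∀ {i j : ι}, i ≠ j → e i * e j = 0
  e_deg : ∀ i, e i ∈ deg 0
  enough_left : DirectSum.IsInternal fun i =>
    Submodule.map (LinearMap.mulLeft K (e i)) (⊤ : Submodule K carrier)
  enough_right : DirectSum.IsInternal fun i =>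
    Submodule.map (LinearMap.mulRight K (e i)) (⊤ : Submodule K carrier)
  d : carrier →ₗ[K] carrier
  d_deg : ∀ {i : ℤ} {a : carrier}, a ∈ deg i → d a ∈ deg (i + 1)
  d_sq : ∀ a, d (d a) = 0
  d_e : ∀ i, d (e i) = 0
  leibniz : ∀ {i : ℤ} {a : carrier}, a ∈ deg i → ∀ b : carrier,
    d (a * b) = d a * b + sgn i • (a * d b)

attribute [instance] DGAlgebra.ring DGAlgebra.mod DGAlgebra.smulComm
  DGAlgebra.tower DGAlgebra.decEq

variable (K : Type) [CommRing K]

/-- A (unitary) right differential graded module over a dg algebra with enough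
idempotents `A`: a graded `K`-module with a right `A`-action (written as a
`K`-bilinear map `act`), compatible with the gradings, unitary
(`M = ⊕ M·eᵢ` internally), together with a square-zero degree `+1`
differential satisfying the graded Leibniz rule. -/
structure DGMod (A : DGAlgebra K) : Type 1 where
  carrier : Type
  [addgrp : AddCommGroup carrier]
  [mod : Module K carrier]
  deg : ℤ → Submodule K carrier
  internal : DirectSum.IsInternal deg
  act : carrier →ₗ[K] A.carrier →ₗ[K] carrier
  act_act : ∀ (x : carrier) (a b : A.carrier), act (act x a) b = act x (a * b)
  act_deg : ∀ {i j : ℤ} {x : carrier} {a : A.carrier},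
    x ∈ deg i → a ∈ A.deg j → act x a ∈ deg (i + j)
  unital : DirectSum.IsInternal fun i =>
    Submodule.map (act.flip (A.e i)) (⊤ : Submodule K carrier)
  d : carrier →ₗ[K] carrier
  d_deg : ∀ {i : ℤ} {x : carrier}, x ∈ deg i → d x ∈ deg (i + 1)
  d_sq : ∀ x, d (d x) = 0
  leibniz : ∀ {i : ℤ} {x : carrier}, x ∈ deg i → ∀ a : A.carrier,
    d (act x a) = act (d x) a + sgn i • act x (A.d a)

attribute [instance] DGMod.addgrp DGMod.mod

variable {K}

/-- The `K`-submodule `HOM_A(M,N)^n` of homogeneous `A`-linear maps of degree `n`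
between right dg `A`-modules: graded maps raising degrees by `n` which commute
with the right `A`-action. -/
def homDeg {A : DGAlgebra K} (M N : DGMod K A) (n : ℤ) :
    Submodule K (M.carrier →ₗ[K] N.carrier) where
  carrier := { f | (∀ (k : ℤ) (x : M.carrier), x ∈ M.deg k → f x ∈ N.deg (k + n)) ∧
      ∀ (x : M.carrier) (a : A.carrier), f (M.act x a) = N.act (f x) a }
  add_mem' := by
    rintro f g ⟨hf1, hf2⟩ ⟨hg1, hg2⟩
    refine ⟨fun k x hx => ?_, fun x a => ?_⟩
    · simpa using Submodule.add_mem _ (hf1 k x hx) (hg1 k x hx)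
    · simp [hf2 x a, hg2 x a]
  zero_mem' := by
    refine ⟨fun k x _ => by simp, fun x a => by simp⟩
  smul_mem' := by
    rintro c f ⟨hf1, hf2⟩
    refine ⟨fun k x hx => ?_, fun x a => ?_⟩
    · simpa using Submodule.smul_mem _ c (hf1 k x hx)
    · simp [hf2 x a]

/-- The differential of a Hom-complex, on maps regarded as homogeneous of
degree `n`: `D(f) = d_N ∘ f - (-1)^n • (f ∘ d_M)`. -/
def Dmap {M N : Type} [AddCommGroup M] [Module K M]
    [AddCommGroup N] [Module K N] (dM : M →ₗ[K] M) (dN : N →ₗ[K] N) (n : ℤ)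
    (f : M →ₗ[K] N) : M →ₗ[K] N :=
  dN ∘ₗ f - sgn n • (f ∘ₗ dM)

/-- The differential of the Hom-complex `HOM_A(M,N)`, on maps regarded as
homogeneous of degree `n`:  `d(f) = d_N ∘ f - (-1)^n f ∘ d_M`. -/
def Dhom {A : DGAlgebra K} (M N : DGMod K A) (n : ℤ)
    (f : M.carrier →ₗ[K] N.carrier) : M.carrier →ₗ[K] N.carrier :=
  Dmap M.d N.d n f

lemma homDeg_comp {A : DGAlgebra K} {M N P : DGMod K A} {m n : ℤ}
    {g : N.carrier →ₗ[K] P.carrier} {f : M.carrier →ₗ[K] N.carrier}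
    (hg : g ∈ homDeg N P m) (hf : f ∈ homDeg M N n) :
    g ∘ₗ f ∈ homDeg M P (m + n) := by
  refine ⟨fun k x hx => ?_, fun x a => ?_⟩
  · have := hg.1 _ _ (hf.1 k x hx)
    rwa [show k + n + m = k + (m + n) by ring] at this
  · simp [LinearMap.comp_apply, hf.2 x a, hg.2]

open CategoryTheory

variable {K : Type} [CommRing K]

/-- A morphism in the category `C(A) = Z⁰(Dg-A)`: a degree-zero homogeneous
`A`-linear map commuting with the differentials (a chain map). -/
structure CMap {A : DGAlgebra K} (M N : DGMod K A) : Type where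
  toFun : M.carrier →ₗ[K] N.carrier
  mem : toFun ∈ homDeg M N 0
  comm : ∀ x, toFun (M.d x) = N.d (toFun x)

@[ext] lemma CMap.ext {A : DGAlgebra K} {M N : DGMod K A} {f g : CMap M N}
    (h : f.toFun = g.toFun) : f = g := by
  cases f; cases g; simpa using h

/-- The category `C(A)` of right dg `A`-modules with chain maps as morphisms. -/
abbrev DGModCat (K : Type) [CommRing K] (A : DGAlgebra K) := DGMod K A

instance {A : DGAlgebra K} : Category (DGModCat K A) where
  Hom M N := CMap M N
  id M := ⟨LinearMap.id,
    ⟨fun k x hx => by simpa using hx, fun _ _ => rfl⟩, fun _ => rfl⟩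
  comp f g := ⟨g.toFun ∘ₗ f.toFun,
    by simpa using homDeg_comp g.mem f.mem,
    fun x => by simp [LinearMap.comp_apply, f.comm, g.comm]⟩
  id_comp f := CMap.ext rfl
  comp_id f := CMap.ext rfl
  assoc f g h := CMap.ext rfl

lemma DGModCat.comp_toFun {A : DGAlgebra K} {M N P : DGModCat K A}
    (f : M ⟶ N) (g : N ⟶ P) : (f ≫ g).toFun = g.toFun ∘ₗ f.toFun := rfl

/-- A chain map is null-homotopic when it is of the form `d∘σ + σ∘d` for a
homogeneous `A`-linear map `σ` of degree `-1`. -/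
def IsNullHomotopic {A : DGAlgebra K} {M N : DGMod K A} (f : CMap M N) : Prop :=
  ∃ σ : M.carrier →ₗ[K] N.carrier, σ ∈ homDeg M N (-1) ∧
    f.toFun = N.d ∘ₗ σ + σ ∘ₗ M.d

/-- The homotopy relation on `C(A)`. -/
def htpyRel (K : Type) [CommRing K] (A : DGAlgebra K) : HomRel (DGModCat K A) :=
  fun _ _ f g => ∃ σ, σ ∈ homDeg _ _ (-1) ∧
    f.toFun - g.toFun = _root_.DGMod.d _ ∘ₗ σ + σ ∘ₗ _root_.DGMod.d _

/-- The homotopy category `H(A)` of the dg algebra with enough idempotents `A`. -/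
abbrev HtpyCat (K : Type) [CommRing K] (A : DGAlgebra K) :=
  CategoryTheory.Quotient (htpyRel K A)

/-- The projection functor `C(A) → H(A)`. -/
def htpyQ (K : Type) [CommRing K] (A : DGAlgebra K) :
    DGModCat K A ⥤ HtpyCat K A :=
  CategoryTheory.Quotient.functor (htpyRel K A)

/-- A right dg module is acyclic when all its homology vanishes: every
homogeneous cycle is the boundary of a homogeneous element. -/
def IsAcyclic {A : DGAlgebra K} (M : DGMod K A) : Prop :=
  ∀ (n : ℤ) (x : M.carrier), x ∈ M.deg n → M.d x = 0 →
    ∃ y ∈ M.deg (n - 1), M.d y = x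

/-- A chain map is a quasi-isomorphism when it induces isomorphisms on all
homology modules. -/
def IsQis {A : DGAlgebra K} {M N : DGMod K A} (f : CMap M N) : Prop :=
  (∀ (n : ℤ) (x : M.carrier), x ∈ M.deg n → M.d x = 0 →
      (∃ z, f.toFun x = N.d z) → ∃ w, x = M.d w) ∧
  (∀ (n : ℤ) (y : N.carrier), y ∈ N.deg n → N.d y = 0 →
      ∃ x z, x ∈ M.deg n ∧ M.d x = 0 ∧ y = f.toFun x + N.d z)

/-- Quasi-isomorphisms, as a class of morphisms of the homotopy category. -/
def qis (K : Type) [CommRing K] (A : DGAlgebra K) : MorphismProperty (HtpyCat K A) :=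
  fun M N φ => ∃ f : CMap M.as N.as, ((htpyQ K A).map f = φ) ∧ IsQis f

/-- The derived category `D(A)`: the localization of the homotopy category
`H(A)` at the class of quasi-isomorphisms. -/
abbrev DerivedCat (K : Type) [CommRing K] (A : DGAlgebra K) :=
  (qis K A).Localization

/-- The localization functor `q : H(A) → D(A)`. -/
def derQ (K : Type) [CommRing K] (A : DGAlgebra K) : HtpyCat K A ⥤ DerivedCat K A :=
  (qis K A).Q

/-- A pair of composable chain maps is a conflation of the semi-split exact
structure on `C(A)` when it is a short exact sequence of dg modules which
splits in the category of graded `A`-modules. -/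
def IsConflation {A : DGAlgebra K} {L M N : DGModCat K A}
    (u : L ⟶ M) (v : M ⟶ N) : Prop :=
  Function.Injective u.toFun ∧ Function.Surjective v.toFun ∧
    LinearMap.range u.toFun = LinearMap.ker v.toFun ∧
    ∃ r : M.carrier →ₗ[K] L.carrier, r ∈ homDeg M L 0 ∧ r ∘ₗ u.toFun = LinearMap.id

/-- `C` "is" the cone `C(1_M)` of the identity of `M`: it is the twisted direct
sum `M ⊕ M[1]` with differential given in matrix form by `[[d_M, 1],[0, -d_M]]`. -/
def IsConeOfId {A : DGAlgebra K} (M C : DGMod K A) : Prop :=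
  ∃ eC : C.carrier ≃ₗ[K] (M.carrier × M.carrier),
    (∀ (n : ℤ) (x : C.carrier), x ∈ C.deg n ↔
        ((eC x).1 ∈ M.deg n ∧ (eC x).2 ∈ M.deg (n + 1))) ∧
    (∀ (x : C.carrier) (a : A.carrier),
        eC (C.act x a) = (M.act (eC x).1 a, M.act (eC x).2 a)) ∧
    (∀ x : C.carrier,
        eC (C.d x) = (M.d (eC x).1 + (eC x).2, - M.d (eC x).2))

/-- A dg module is contractible when it is a direct summand, in `C(A)`, of a
cone of an identity morphism. -/
def IsContractible {A : DGAlgebra K} (P : DGModCat K A) : Prop :=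
  ∃ (M C : DGModCat K A) (_ : IsConeOfId M C) (s : P ⟶ C) (r : C ⟶ P),
    s ≫ r = 𝟙 P

/-- `N` "is" the shift `M[1]` of the dg module `M`. -/
structure ShiftWitness {A : DGAlgebra K} (M N : DGMod K A) : Type where
  eqv : N.carrier ≃ₗ[K] M.carrier
  deg : ∀ (n : ℤ) (x : N.carrier), x ∈ N.deg n ↔ eqv x ∈ M.deg (n + 1)
  act : ∀ x a, eqv (N.act x a) = M.act (eqv x) a
  d : ∀ x, eqv (N.d x) = - M.d (eqv x)

/-- A right dg module `P` is homotopically projective when every chain map from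
`P` to an acyclic dg module is null-homotopic, i.e. `Hom_{H(A)}(P,?)` vanishes
on acyclic modules. -/
def IsHtpyProj {A : DGAlgebra K} (P : DGMod K A) : Prop :=
  ∀ N : DGMod K A, IsAcyclic N → ∀ f : CMap P N, IsNullHomotopic f

/-- A right dg module `I` is homotopically injective when every chain map from
an acyclic dg module to `I` is null-homotopic. -/
def IsHtpyInj {A : DGAlgebra K} (I : DGMod K A) : Prop :=
  ∀ N : DGMod K A, IsAcyclic N → ∀ f : CMap N I, IsNullHomotopic f

open CategoryTheory.Pretriangulated

/-- A witness that the localization functor `q : H(A) → D(A)` has a triangulated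
fully faithful left adjoint `Π` (the homotopically projective resolution
functor) and a triangulated fully faithful right adjoint `Υ` (the homotopically
injective resolution functor), whose essential images consist of homotopically
projective, resp. homotopically injective, dg modules.  The (quantified)
triangulated structures involved are required to be the canonical ones: the
suspension of `H(A)` is induced by the shift of dg modules, the distinguished
triangles of `H(A)` come from conflations, and those of `D(A)` are the images
of the distinguished triangles of `H(A)`. -/
structure ResolutionAdjointsWitness (K : Type) [CommRing K] (A : DGAlgebra K) where
  [preH : Preadditive (HtpyCat K A)]
  [zoH : Limits.HasZeroObject (HtpyCat K A)]
  [hsH : HasShift (HtpyCat K A) ℤ]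
  [addH : ∀ n : ℤ, (shiftFunctor (HtpyCat K A) n).Additive]
  [ptH : Pretriangulated (HtpyCat K A)]
  [preD : Preadditive (DerivedCat K A)]
  [zoD : Limits.HasZeroObject (DerivedCat K A)]
  [hsD : HasShift (DerivedCat K A) ℤ]
  [addD : ∀ n : ℤ, (shiftFunctor (DerivedCat K A) n).Additive]
  [ptD : Pretriangulated (DerivedCat K A)]
  shift_obj : ∀ M : HtpyCat K A,
    Nonempty (ShiftWitness M.as ((shiftFunctor (HtpyCat K A) (1 : ℤ)).obj M).as)
  distH_of_conflation : ∀ {L M N : DGModCat K A} (u : L ⟶ M) (v : M ⟶ N),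
    IsConflation u v →
    ∃ w : (htpyQ K A).obj N ⟶ (shiftFunctor (HtpyCat K A) (1 : ℤ)).obj ((htpyQ K A).obj L),
      Triangle.mk ((htpyQ K A).map u) ((htpyQ K A).map v) w ∈
        (distinguishedTriangles : Set (Triangle (HtpyCat K A)))
  [csQ : (derQ K A).CommShift ℤ]
  distD_char : ∀ T : Triangle (DerivedCat K A),
    T ∈ (distinguishedTriangles : Set (Triangle (DerivedCat K A))) ↔
      ∃ T' ∈ (distinguishedTriangles : Set (Triangle (HtpyCat K A))),
        Nonempty (T ≅ (derQ K A).mapTriangle.obj T')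
  Pi : DerivedCat K A ⥤ HtpyCat K A
  adjPi : Pi ⊣ derQ K A
  [csPi : Pi.CommShift ℤ]
  trPi : Pi.IsTriangulated
  fullPi : Pi.Full
  faithfulPi : Pi.Faithful
  imagePi : ∀ Y : DerivedCat K A, IsHtpyProj (Pi.obj Y).as
  Ups : DerivedCat K A ⥤ HtpyCat K A
  adjUps : derQ K A ⊣ Ups
  [csUps : Ups.CommShift ℤ]
  trUps : Ups.IsTriangulated
  fullUps : Ups.Full
  faithfulUps : Ups.Faithful
  imageUps : ∀ Y : DerivedCat K A, IsHtpyInj (Ups.obj Y).as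

/-! A map that vanishes on homology is called a ghost. The module `A`, its shifts and their
coproducts are homotopically projective, while the modules coinduced from injective `K`-modules,
their shifts and their products are homotopically injective. Every `M` therefore receives a map
from a homotopically projective module that is surjective on homology, and maps to a
homotopically injective module injectively on homology; so `M → cone` in the first case and
`fiber → M` in the second are ghosts. Iterate, and let `s` be the shift map of the resulting
sequence on the coproduct (product) of its terms. It is a ghost, so `1 - s` is a
quasi-isomorphism and its cone `T` is acyclic. On the other hand, every map from `M` to an
acyclic module factors uniquely through `M → T` because this holds for each map of the sequence,
so the fiber of `M → T` is homotopically projective, and dually. Approximating every object in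
this way by objects orthogonal to the acyclic modules amounts to constructing both adjoints of
the Verdier quotient `q`. -/

section InternalDirectSum

variable {R J V W : Type*} [Ring R] [DecidableEq J] [AddCommGroup V] [Module R V]
  [AddCommGroup W] [Module R W] {D : J → Submodule R V}

/-- The decomposition of a module along an internal direct sum. -/
def internalEquiv (h : DirectSum.IsInternal D) : V ≃ₗ[R] ⨁ j, D j :=
  (LinearEquiv.ofBijective (DirectSum.coeLinearMap D) h).symm

lemma internalEquiv_of_mem (h : DirectSum.IsInternal D) {j : J} {x : V} (hx : x ∈ D j) :
    internalEquiv h x = DirectSum.lof R J (fun j => D j) j ⟨x, hx⟩ := by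
  rw [internalEquiv, LinearEquiv.symm_apply_eq]
  exact (DirectSum.coeLinearMap_lof D j ⟨x, hx⟩).symm

/-- The linear map out of an internal direct sum that restricts to `φ j` on the `j`-th
summand. -/
def internalLift (h : DirectSum.IsInternal D) (φ : J → V →ₗ[R] W) : V →ₗ[R] W :=
  DirectSum.toModule R J W (fun j => φ j ∘ₗ (D j).subtype) ∘ₗ (internalEquiv h).toLinearMap

lemma internalLift_of_mem (h : DirectSum.IsInternal D) (φ : J → V →ₗ[R] W) {j : J} {x : V}
    (hx : x ∈ D j) : internalLift h φ x = φ j x := by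
  simp [internalLift, internalEquiv_of_mem h hx]

/-- The projection of an internal direct sum onto its `j`-th summand. -/
def internalProj (h : DirectSum.IsInternal D) (j : J) : V →ₗ[R] V :=
  (D j).subtype ∘ₗ DirectSum.component R J (fun j => D j) j ∘ₗ (internalEquiv h).toLinearMap

lemma internalProj_mem (h : DirectSum.IsInternal D) (j : J) (x : V) :
    internalProj h j x ∈ D j :=
  (internalEquiv h x j).2

lemma internalProj_of_mem (h : DirectSum.IsInternal D) {j : J} {x : V} (hx : x ∈ D j) :
    internalProj h j x = x := by
  simp [internalProj, internalEquiv_of_mem h hx, DirectSum.component.lof_self]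

lemma internalProj_of_mem_ne (h : DirectSum.IsInternal D) {i j : J} {x : V} (hx : x ∈ D i)
    (hij : i ≠ j) : internalProj h j x = 0 := by
  simp [internalProj, internalEquiv_of_mem h hx, DirectSum.component.of, hij]

@[elab_as_elim]
lemma internal_induction (h : DirectSum.IsInternal D) {P : V → Prop}
    (mem : ∀ j, ∀ x ∈ D j, P x) (zero : P 0) (add : ∀ x y, P x → P y → P (x + y)) (x : V) :
    P x :=
  Submodule.iSup_induction D (motive := P) (h.submodule_iSup_eq_top ▸ Submodule.mem_top)
    mem zero add

lemma internal_hom_ext (h : DirectSum.IsInternal D) {f g : V →ₗ[R] W}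
    (hfg : ∀ j, ∀ x ∈ D j, f x = g x) : f = g := by
  ext x
  induction x using internal_induction h with
  | mem j x hx => exact hfg j x hx
  | zero => simp only [map_zero]
  | add x y hx hy => simp only [map_add, hx, hy]

lemma mem_of_internalProj_mem (h : DirectSum.IsInternal D) {S : Submodule R V} {x : V}
    (hx : ∀ j, internalProj h j x ∈ S) : x ∈ S := by
  classical
  rw [← (internalEquiv h).symm_apply_apply x]
  change DirectSum.coeLinearMap D (internalEquiv h x) ∈ S
  rw [DirectSum.coeLinearMap_eq_dfinsuppSum]
  exact sum_mem fun j _ => hx j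

lemma isInternal_of_proj (pr : J → V →ₗ[R] V) (pr_of_mem : ∀ {j x}, x ∈ D j → pr j x = x)
    (pr_of_mem_ne : ∀ {i j x}, x ∈ D i → i ≠ j → pr j x = 0) (iSup_eq_top : ⨆ j, D j = ⊤) :
    DirectSum.IsInternal D := by
  refine (DirectSum.isInternal_submodule_iff_iSupIndep_and_iSup_eq_top D).2 ⟨fun j => ?_,
    iSup_eq_top⟩
  have others_le_ker : (⨆ i, ⨆ (_ : i ≠ j), D i) ≤ LinearMap.ker (pr j) :=
    iSup₂_le fun i hij y hy => pr_of_mem_ne hy hij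
  exact Submodule.disjoint_def.2 fun x hx hx' => (pr_of_mem hx).symm.trans (others_le_ker hx')

end InternalDirectSum

section Sign

lemma sgn_add (m n : ℤ) : sgn (m + n) = sgn m * sgn n := by simp [sgn, zpow_add]

@[simp] lemma sgn_zero : sgn 0 = 1 := by simp [sgn]

@[simp] lemma sgn_one : sgn 1 = -1 := by simp [sgn]

@[simp] lemma sgn_mul_self (n : ℤ) : sgn n * sgn n = 1 := by
  simp only [sgn, ← Units.val_mul, ← mul_zpow]
  simp

@[simp] lemma sgn_neg (n : ℤ) : sgn (-n) = sgn n := by simp [sgn]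

@[simp] lemma sgn_smul_sgn_smul {V : Type*} [AddCommGroup V] (n : ℤ) (x : V) :
    sgn n • sgn n • x = x := by
  rw [smul_smul, sgn_mul_self, one_smul]

end Sign

variable {A : DGAlgebra K}

namespace DGMod

variable (M : DGMod K A)

lemma act_e_of_mem {i : A.ι} {x : M.carrier}
    (hx : x ∈ Submodule.map (M.act.flip (A.e i)) ⊤) : M.act x (A.e i) = x := by
  obtain ⟨y, -, rfl⟩ := hx
  simp [M.act_act, A.e_idem]

lemma act_e_of_mem_ne {i j : A.ι} {x : M.carrier}
    (hx : x ∈ Submodule.map (M.act.flip (A.e i)) ⊤) (hij : i ≠ j) : M.act x (A.e j) = 0 := by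
  obtain ⟨y, -, rfl⟩ := hx
  simp [M.act_act, A.e_orth hij]

lemma act_e_mem_deg {n : ℤ} {x : M.carrier} (hx : x ∈ M.deg n) (i : A.ι) :
    M.act x (A.e i) ∈ M.deg n := by
  simpa using M.act_deg hx (A.e_deg i)

lemma exists_sum_act_e (x : M.carrier) : ∃ F : Finset A.ι, ∑ i ∈ F, M.act x (A.e i) = x := by
  suffices ∃ F : Finset A.ι, ∀ G, F ⊆ G → ∑ i ∈ G, M.act x (A.e i) = x from
    this.imp fun F hF => hF F subset_rfl
  induction x using internal_induction M.unital with
  | mem i x hx =>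
    refine ⟨{i}, fun G hG => ?_⟩
    rw [Finset.sum_eq_single_of_mem i (hG (by simp))
      fun j _ hj => M.act_e_of_mem_ne hx hj.symm, M.act_e_of_mem hx]
  | zero => exact ⟨∅, by simp⟩
  | add x y hx hy =>
    obtain ⟨F, hF⟩ := hx
    obtain ⟨F', hF'⟩ := hy
    refine ⟨F ∪ F', fun G hG => ?_⟩
    simp only [map_add, LinearMap.add_apply, Finset.sum_add_distrib,
      hF G (Finset.union_subset_left hG), hF' G (Finset.union_subset_right hG)]

@[elab_as_elim]
lemma homogeneous_induction {M : DGMod K A} {P : M.carrier → Prop}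
    (mem : ∀ n i x, x ∈ M.deg n → M.act x (A.e i) = x → P x) (zero : P 0)
    (add : ∀ x y, P x → P y → P (x + y)) (x : M.carrier) : P x := by
  induction x using internal_induction M.internal with
  | mem n x hx =>
    obtain ⟨F, hF⟩ := M.exists_sum_act_e x
    rw [← hF]
    refine Finset.sum_induction _ P add zero fun i _ => mem n i _ (M.act_e_mem_deg hx i) ?_
    rw [M.act_act, A.e_idem]
  | zero => exact zero
  | add x y hx hy => exact add x y hx hy

end DGMod

/-- A dg module without the finiteness conditions: the homogeneous components are independent, as
witnessed by projections `proj`, but neither they nor the pieces `V·eᵢ` are required to span `V`.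
Products and duals of dg modules are of this kind. -/
structure PreDGMod (A : DGAlgebra K) : Type 1 where
  carrier : Type
  [addgrp : AddCommGroup carrier]
  [mod : Module K carrier]
  deg : ℤ → Submodule K carrier
  proj : ℤ → carrier →ₗ[K] carrier
  proj_of_mem : ∀ {n x}, x ∈ deg n → proj n x = x
  proj_of_mem_ne : ∀ {m n x}, x ∈ deg m → m ≠ n → proj n x = 0
  act : carrier →ₗ[K] A.carrier →ₗ[K] carrier
  act_act : ∀ (x : carrier) (a b : A.carrier), act (act x a) b = act x (a * b)
  act_deg : ∀ {i j : ℤ} {x : carrier} {a : A.carrier},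
    x ∈ deg i → a ∈ A.deg j → act x a ∈ deg (i + j)
  d : carrier →ₗ[K] carrier
  d_deg : ∀ {i : ℤ} {x : carrier}, x ∈ deg i → d x ∈ deg (i + 1)
  d_sq : ∀ x, d (d x) = 0
  leibniz : ∀ {i : ℤ} {x : carrier}, x ∈ deg i → ∀ a : A.carrier,
    d (act x a) = act (d x) a + sgn i • act x (A.d a)

attribute [instance] PreDGMod.addgrp PreDGMod.mod

/-- The algebra `A` as a right dg module over itself. -/
abbrev regularModule (A : DGAlgebra K) : DGMod K A where
  carrier := A.carrier
  deg := A.deg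
  internal := A.internal
  act := LinearMap.mul K A.carrier
  act_act := mul_assoc
  act_deg := A.mul_mem
  unital := A.enough_right
  d := A.d
  d_deg := A.d_deg
  d_sq := A.d_sq
  leibniz := A.leibniz

namespace PreDGMod

variable (V : PreDGMod A)

/-- The homogeneous elements of degree `n` fixed by the idempotent `e i`. -/
def piece (n : ℤ) (i : A.ι) : Submodule K V.carrier :=
  V.deg n ⊓ LinearMap.eqLocus (V.act.flip (A.e i)) LinearMap.id

/-- The part of `V` spanned by its homogeneous elements fixed by some idempotent, which is the
largest dg module contained in `V`. -/
def finitePart : Submodule K V.carrier := ⨆ n, ⨆ i, V.piece n i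

variable {V}

lemma mem_finitePart {n : ℤ} {i : A.ι} {x : V.carrier} (hx : x ∈ V.deg n)
    (hxi : V.act x (A.e i) = x) : x ∈ V.finitePart :=
  Submodule.mem_iSup_of_mem n (Submodule.mem_iSup_of_mem i ⟨hx, hxi⟩)

lemma finitePart_le {S : Submodule K V.carrier}
    (hS : ∀ n i x, x ∈ V.deg n → V.act x (A.e i) = x → x ∈ S) : V.finitePart ≤ S :=
  iSup₂_le fun n i x hx => hS n i x hx.1 hx.2

lemma map_mem_finitePart {N : DGMod K A} {n : ℤ} {f : N.carrier →ₗ[K] V.carrier}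
    (hdeg : ∀ k x, x ∈ N.deg k → f x ∈ V.deg (k + n))
    (hact : ∀ x a, f (N.act x a) = V.act (f x) a) (x : N.carrier) : f x ∈ V.finitePart := by
  induction x using DGMod.homogeneous_induction with
  | mem k i x hx hxi => exact mem_finitePart (hdeg k x hx) (by rw [← hact, hxi])
  | zero => rw [map_zero]; exact zero_mem _
  | add x y hx hy => rw [map_add]; exact add_mem hx hy

variable (V)

lemma iSup_deg_eq_top (h : V.finitePart = ⊤) : ⨆ n, V.deg n = ⊤ :=
  top_unique (h.ge.trans (iSup_mono fun _ => iSup_le fun _ => inf_le_left))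

lemma iSup_map_act_e_eq_top (h : V.finitePart = ⊤) :
    ⨆ i, Submodule.map (V.act.flip (A.e i)) ⊤ = ⊤ :=
  top_unique (h.ge.trans (finitePart_le fun _ i x _ hxi =>
    Submodule.mem_iSup_of_mem i ⟨x, trivial, hxi⟩))

/-- A pre-dg module satisfying the finiteness conditions, as a dg module. -/
abbrev toDGMod (h : V.finitePart = ⊤) : DGMod K A where
  carrier := V.carrier
  deg := V.deg
  internal := isInternal_of_proj V.proj V.proj_of_mem V.proj_of_mem_ne (V.iSup_deg_eq_top h)
  act := V.act
  act_act := V.act_act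
  act_deg := V.act_deg
  unital := isInternal_of_proj (fun i => V.act.flip (A.e i))
    (by rintro i _ ⟨x, -, rfl⟩; simp [V.act_act, A.e_idem])
    (by rintro i j _ ⟨x, -, rfl⟩ hij; simp [V.act_act, A.e_orth hij])
    (V.iSup_map_act_e_eq_top h)
  d := V.d
  d_deg := V.d_deg
  d_sq := V.d_sq
  leibniz := V.leibniz

variable {V}

lemma proj_mem_finitePart (n : ℤ) {x : V.carrier} (hx : x ∈ V.finitePart) :
    V.proj n x ∈ V.finitePart := by
  refine finitePart_le (S := V.finitePart.comap (V.proj n)) (fun m i x hx hxi => ?_) hx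
  rw [Submodule.mem_comap]
  obtain rfl | hmn := eq_or_ne m n
  · rw [V.proj_of_mem hx]
    exact mem_finitePart hx hxi
  · rw [V.proj_of_mem_ne hx hmn]
    exact zero_mem _

lemma act_mem_finitePart {x : V.carrier} (hx : x ∈ V.finitePart) (a : A.carrier) :
    V.act x a ∈ V.finitePart := by
  refine finitePart_le (S := V.finitePart.comap (V.act.flip a)) (fun n i x hx _ => ?_) hx
  exact map_mem_finitePart (N := regularModule A) (n := n) (f := V.act x)
    (fun m a ha => add_comm n m ▸ V.act_deg hx ha) (fun a b => (V.act_act x a b).symm) a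

lemma d_mem_finitePart {x : V.carrier} (hx : x ∈ V.finitePart) : V.d x ∈ V.finitePart := by
  refine finitePart_le (S := V.finitePart.comap V.d) (fun n i x hx hxi => ?_) hx
  have hdx := V.leibniz hx (A.e i)
  rw [hxi, A.d_e, map_zero, smul_zero, add_zero] at hdx
  exact mem_finitePart (V.d_deg hx) hdx.symm

variable (V)

/-- The finite part of a pre-dg module, as a pre-dg module. -/
abbrev corePre : PreDGMod A where
  carrier := V.finitePart
  deg n := (V.deg n).comap V.finitePart.subtype
  proj n := (V.proj n).restrict fun _ => proj_mem_finitePart n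
  proj_of_mem h := Subtype.ext (V.proj_of_mem h)
  proj_of_mem_ne h h' := Subtype.ext (V.proj_of_mem_ne h h')
  act := LinearMap.mk₂ K (fun x a => ⟨V.act x a, act_mem_finitePart x.2 a⟩)
    (by intros; ext; simp) (by intros; ext; simp) (by intros; ext; simp) (by intros; ext; simp)
  act_act x a b := Subtype.ext (V.act_act _ _ _)
  act_deg h h' := V.act_deg (i := _) (j := _) h h'
  d := V.d.restrict fun _ => d_mem_finitePart
  d_deg h := V.d_deg h
  d_sq x := Subtype.ext (V.d_sq _)
  leibniz h a := Subtype.ext (by simpa using V.leibniz h a)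

lemma corePre_finitePart : V.corePre.finitePart = ⊤ := by
  have le_map : V.finitePart ≤ V.corePre.finitePart.map V.finitePart.subtype :=
    finitePart_le fun n i x hx hxi =>
      ⟨⟨x, mem_finitePart hx hxi⟩, mem_finitePart (V := V.corePre) hx (Subtype.ext hxi), rfl⟩
  refine eq_top_iff.2 fun x _ => ?_
  obtain ⟨y, hy, hyx⟩ := le_map x.2
  rwa [← Subtype.ext hyx]

/-- The finite part of a pre-dg module, as a dg module. -/
abbrev core : DGMod K A := V.corePre.toDGMod V.corePre_finitePart

end PreDGMod

lemma CMap.map_deg {M N : DGMod K A} (f : CMap M N) {n : ℤ} {x : M.carrier} (hx : x ∈ M.deg n) :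
    f.toFun x ∈ N.deg n := by
  simpa using f.mem.1 n x hx

lemma mem_homDeg_zero {M N : DGMod K A} {f : M.carrier →ₗ[K] N.carrier}
    (hdeg : ∀ k x, x ∈ M.deg k → f x ∈ N.deg k)
    (hact : ∀ x a, f (M.act x a) = N.act (f x) a) : f ∈ homDeg M N 0 :=
  ⟨fun k x hx => by simpa using hdeg k x hx, hact⟩

namespace DGMod

/-- The `n`-th component of an element of a dg module. -/
def proj (M : DGMod K A) (n : ℤ) : M.carrier →ₗ[K] M.carrier := internalProj M.internal n

variable {M : DGMod K A}

lemma proj_of_mem {n : ℤ} {x : M.carrier} (hx : x ∈ M.deg n) : M.proj n x = x :=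
  internalProj_of_mem M.internal hx

lemma proj_of_mem_ne {m n : ℤ} {x : M.carrier} (hx : x ∈ M.deg m) (hmn : m ≠ n) :
    M.proj n x = 0 :=
  internalProj_of_mem_ne M.internal hx hmn

lemma proj_mem (n : ℤ) (x : M.carrier) : M.proj n x ∈ M.deg n :=
  internalProj_mem M.internal n x

lemma d_proj (n : ℤ) (x : M.carrier) : M.d (M.proj n x) = M.proj (n + 1) (M.d x) := by
  induction x using internal_induction M.internal with
  | mem m x hx =>
    obtain rfl | hmn := eq_or_ne m n
    · rw [proj_of_mem hx, proj_of_mem (M.d_deg hx)]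
    · rw [proj_of_mem_ne hx hmn, proj_of_mem_ne (M.d_deg hx) (by simpa using hmn), map_zero]
  | zero => simp only [map_zero]
  | add x y hx hy => simp only [map_add, hx, hy]

lemma d_proj_sub_one (n : ℤ) (x : M.carrier) : M.d (M.proj (n - 1) x) = M.proj n (M.d x) := by
  rw [d_proj, sub_add_cancel]

lemma mem_of_proj_mem {S : Submodule K M.carrier} {x : M.carrier} (h : ∀ n, M.proj n x ∈ S) :
    x ∈ S :=
  mem_of_internalProj_mem M.internal h

end DGMod

lemma CMap.map_proj {M N : DGMod K A} (f : CMap M N) (n : ℤ) (x : M.carrier) :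
    f.toFun (M.proj n x) = N.proj n (f.toFun x) := by
  induction x using internal_induction M.internal with
  | mem m x hx =>
    obtain rfl | hmn := eq_or_ne m n
    · rw [DGMod.proj_of_mem hx, DGMod.proj_of_mem (f.map_deg hx)]
    · rw [DGMod.proj_of_mem_ne hx hmn, DGMod.proj_of_mem_ne (f.map_deg hx) hmn, map_zero]
  | zero => simp only [map_zero]
  | add x y hx hy => simp only [map_add, hx, hy]

section Shift

namespace DGMod

/-- The shift `M[n]` before its finiteness conditions are checked. -/
abbrev shiftPre (M : DGMod K A) (n : ℤ) : PreDGMod A where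
  carrier := M.carrier
  deg k := M.deg (k + n)
  proj k := M.proj (k + n)
  proj_of_mem := proj_of_mem
  proj_of_mem_ne hx h := proj_of_mem_ne hx (by omega)
  act := M.act
  act_act := M.act_act
  act_deg {i j} x a hx ha := by
    rw [add_right_comm]
    exact M.act_deg hx ha
  d := sgn n • M.d
  d_deg {i} x hx := by
    rw [add_right_comm]
    exact zsmul_mem (M.d_deg hx) _
  d_sq x := by simp [M.d_sq]
  leibniz {i} x hx a := by
    have sgn_cancel : sgn n * (sgn i * sgn n) = sgn i := by
      rw [mul_left_comm, sgn_mul_self, mul_one]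
    simp [M.leibniz hx, sgn_add, smul_smul, sgn_cancel]

lemma shiftPre_finitePart (M : DGMod K A) (n : ℤ) : (M.shiftPre n).finitePart = ⊤ :=
  top_unique fun x _ => PreDGMod.map_mem_finitePart (V := M.shiftPre n) (N := M) (n := -n)
    (f := LinearMap.id) (fun k x hx => by simpa using hx) (fun _ _ => rfl) x

/-- The shift `M[n]`: degrees are lowered by `n` and the differential is multiplied by `(-1)^n`,
while the action is that of `M`. -/
abbrev shift (M : DGMod K A) (n : ℤ) : DGMod K A := (M.shiftPre n).toDGMod (M.shiftPre_finitePart n)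

end DGMod

/-- The shift `f[n]` of a chain map. -/
abbrev CMap.shift {M N : DGMod K A} (f : CMap M N) (n : ℤ) : CMap (M.shift n) (N.shift n) where
  toFun := f.toFun
  mem := mem_homDeg_zero (fun _ _ hx => f.map_deg hx) f.mem.2
  comm x := by simp [f.comm]

end Shift

namespace CMap

variable {M N : DGMod K A} (f : CMap M N)

/-- The mapping cone before its finiteness conditions are checked. -/
abbrev conePre : PreDGMod A where
  carrier := N.carrier × M.carrier
  deg n := (N.deg n).prod (M.deg (n + 1))
  proj n := (N.proj n).prodMap (M.proj (n + 1))
  proj_of_mem h := Prod.ext (DGMod.proj_of_mem h.1) (DGMod.proj_of_mem h.2)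
  proj_of_mem_ne h hmn :=
    Prod.ext (DGMod.proj_of_mem_ne h.1 hmn) (DGMod.proj_of_mem_ne h.2 (by omega))
  act := LinearMap.mk₂ K (fun x a => (N.act x.1 a, M.act x.2 a))
    (by intros; ext <;> simp) (by intros; ext <;> simp)
    (by intros; ext <;> simp) (by intros; ext <;> simp)
  act_act x a b := Prod.ext (N.act_act _ _ _) (M.act_act _ _ _)
  act_deg {i j} x a hx ha :=
    ⟨N.act_deg hx.1 ha, add_right_comm i j 1 ▸ M.act_deg hx.2 ha⟩
  d := (N.d ∘ₗ LinearMap.fst K _ _ + f.toFun ∘ₗ LinearMap.snd K _ _).prod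
    (-(M.d ∘ₗ LinearMap.snd K _ _))
  d_deg hx := ⟨add_mem (N.d_deg hx.1) (f.map_deg hx.2), neg_mem (M.d_deg hx.2)⟩
  d_sq x := Prod.ext (by simp [N.d_sq, f.comm]) (by simp [M.d_sq])
  leibniz hx a := Prod.ext
    (by simp [N.leibniz hx.1, f.mem.2, add_right_comm])
    (by simp [M.leibniz hx.2, sgn_add, add_comm])

lemma conePre_finitePart : f.conePre.finitePart = ⊤ := by
  refine top_unique fun x _ => ?_
  have inl_mem : (x.1, 0) ∈ f.conePre.finitePart :=
    PreDGMod.map_mem_finitePart (V := f.conePre) (n := 0) (f := LinearMap.inl K _ _)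
      (fun k x hx => ⟨by simpa using hx, zero_mem _⟩) (fun _ _ => Prod.ext rfl (by simp)) x.1
  have inr_mem : (0, x.2) ∈ f.conePre.finitePart :=
    PreDGMod.map_mem_finitePart (V := f.conePre) (n := -1) (f := LinearMap.inr K _ _)
      (fun k x hx => ⟨zero_mem _, by simpa using hx⟩) (fun _ _ => Prod.ext (by simp) rfl) x.2
  simpa using add_mem inl_mem inr_mem

/-- The mapping cone of `f : M → N`, that is `N ⊕ M[1]` with the differential twisted by `f`. -/
abbrev cone : DGMod K A := f.conePre.toDGMod f.conePre_finitePart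

/-- The inclusion of the target of a chain map into its cone. -/
abbrev toCone : CMap N f.cone where
  toFun := LinearMap.inl K _ _
  mem := mem_homDeg_zero (fun _ _ hx => ⟨hx, zero_mem _⟩) fun _ _ => Prod.ext rfl (by simp)
  comm x := by simp

/-- The projection of the cone of a chain map onto the shift of its source. -/
abbrev fromCone : CMap f.cone (M.shift 1) where
  toFun := LinearMap.snd K _ _
  mem := mem_homDeg_zero (fun _ _ hx => hx.2) fun _ _ => rfl
  comm x := by simp

end CMap

namespace DGMod

variable {J : Type} (X : J → DGMod K A)

section Coproduct

open Classical in
/-- The coproduct of dg modules before its finiteness conditions are checked. -/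
abbrev coproductPre : PreDGMod A where
  carrier := Π₀ j, (X j).carrier
  deg n := ⨅ j, ((X j).deg n).comap (DFinsupp.lapply j)
  proj n := DFinsupp.mapRange.linearMap fun j => (X j).proj n
  proj_of_mem h := DFinsupp.ext fun j => by
    simpa using proj_of_mem (Submodule.mem_iInf _ |>.1 h j)
  proj_of_mem_ne h hmn := DFinsupp.ext fun j => by
    simpa using proj_of_mem_ne (Submodule.mem_iInf _ |>.1 h j) hmn
  act := LinearMap.mk₂ K (fun x a => DFinsupp.mapRange.linearMap (fun j => (X j).act.flip a) x)
    (by intros; ext; simp) (by intros; ext; simp) (by intros; ext; simp) (by intros; ext; simp)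
  act_act x a b := by ext; simp [DGMod.act_act]
  act_deg hx ha := (Submodule.mem_iInf _).2 fun j => by
    simpa using (X j).act_deg (Submodule.mem_iInf _ |>.1 hx j) ha
  d := DFinsupp.mapRange.linearMap fun j => (X j).d
  d_deg hx := (Submodule.mem_iInf _).2 fun j => by
    simpa using (X j).d_deg (Submodule.mem_iInf _ |>.1 hx j)
  d_sq x := by ext; simp [DGMod.d_sq]
  leibniz hx a := by ext j; simpa using (X j).leibniz (Submodule.mem_iInf _ |>.1 hx j) a

open Classical in
lemma coproductPre_single {j : J} {n : ℤ} {x : (X j).carrier} (hx : x ∈ (X j).deg n) :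
    DFinsupp.single j x ∈ (coproductPre X).deg n := by
  refine (Submodule.mem_iInf _).2 fun i => ?_
  obtain rfl | hij := eq_or_ne j i
  · simpa using hx
  · simp [DFinsupp.single_eq_of_ne hij.symm]

open Classical in
lemma coproductPre_single_act {j : J} (x : (X j).carrier) (a : A.carrier) :
    DFinsupp.single j ((X j).act x a) = (coproductPre X).act (DFinsupp.single j x) a := by
  simp [DFinsupp.mapRange_single]

lemma coproductPre_finitePart : (coproductPre X).finitePart = ⊤ := by
  classical
  refine top_unique fun x _ => ?_
  induction x using DFinsupp.induction with
  | h0 => exact zero_mem _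
  | ha j x y _ _ hy =>
    refine add_mem ?_ (hy trivial)
    exact PreDGMod.map_mem_finitePart (V := coproductPre X) (n := 0)
      (f := (DFinsupp.lsingle j : _ →ₗ[K] Π₀ j, (X j).carrier))
      (fun k x hx => coproductPre_single X ((add_zero k).symm ▸ hx)) (coproductPre_single_act X) x

/-- The coproduct of a family of dg modules. -/
abbrev coproduct : DGMod K A := (coproductPre X).toDGMod (coproductPre_finitePart X)

open Classical in
/-- The inclusion of a summand of a coproduct. -/
abbrev coproductι (j : J) : CMap (X j) (coproduct X) where
  toFun := (DFinsupp.lsingle j : _ →ₗ[K] Π₀ j, (X j).carrier)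
  mem := mem_homDeg_zero (fun _ _ => coproductPre_single X) (coproductPre_single_act X)
  comm x := by simp [DFinsupp.mapRange_single]

variable {X}

open Classical in
/-- The linear map out of a coproduct with given components. -/
abbrev coproductLift {N : DGMod K A} (φ : ∀ j, (X j).carrier →ₗ[K] N.carrier) :
    (coproduct X).carrier →ₗ[K] N.carrier :=
  DFinsupp.lsum ℕ φ

lemma coproduct_hom_ext {W : Type*} [AddCommGroup W] [Module K W]
    {f g : (coproduct X).carrier →ₗ[K] W}
    (h : ∀ j x, f ((coproductι X j).toFun x) = g ((coproductι X j).toFun x)) : f = g := by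
  classical
  exact DFinsupp.lhom_ext h

lemma coproductLift_mem {N : DGMod K A} {n : ℤ} {φ : ∀ j, (X j).carrier →ₗ[K] N.carrier}
    (hφ : ∀ j, φ j ∈ homDeg (X j) N n) : coproductLift φ ∈ homDeg (coproduct X) N n := by
  classical
  refine ⟨fun k x hx => ?_, fun x a => ?_⟩
  · simp only [coproductLift, DFinsupp.lsum_apply_apply, DFinsupp.sumAddHom_apply]
    exact sum_mem fun j _ => (hφ j).1 k _ ((Submodule.mem_iInf _).1 hx j)
  · refine LinearMap.congr_fun (coproduct_hom_ext fun j x => ?_ :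
      coproductLift φ ∘ₗ (coproduct X).act.flip a = N.act.flip a ∘ₗ coproductLift φ) x
    simp [DFinsupp.mapRange_single, (hφ j).2]

/-- The chain map out of a coproduct with given components. -/
abbrev coproductDesc {N : DGMod K A} (f : ∀ j, CMap (X j) N) : CMap (coproduct X) N where
  toFun := coproductLift fun j => (f j).toFun
  mem := coproductLift_mem fun j => (f j).mem
  comm x := LinearMap.congr_fun (coproduct_hom_ext fun j x => by
    simp [DFinsupp.mapRange_single, (f j).comm] :
      (coproductLift fun j => (f j).toFun) ∘ₗ (coproduct X).d =
        N.d ∘ₗ coproductLift fun j => (f j).toFun) x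

end Coproduct

section Product

/-- The degreewise and pointwise product of dg modules, of which the product in `C(A)` is the
finite part. -/
abbrev productPre : PreDGMod A where
  carrier := ∀ j, (X j).carrier
  deg n := Submodule.pi Set.univ fun j => (X j).deg n
  proj n := LinearMap.pi fun j => (X j).proj n ∘ₗ LinearMap.proj j
  proj_of_mem h := funext fun j => proj_of_mem (h j trivial)
  proj_of_mem_ne h hmn := funext fun j => proj_of_mem_ne (h j trivial) hmn
  act := LinearMap.mk₂ K (fun x a j => (X j).act (x j) a)
    (by intros; ext; simp) (by intros; ext; simp) (by intros; ext; simp) (by intros; ext; simp)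
  act_act x a b := funext fun j => (X j).act_act _ _ _
  act_deg hx ha j _ := (X j).act_deg (hx j trivial) ha
  d := LinearMap.pi fun j => (X j).d ∘ₗ LinearMap.proj j
  d_deg hx j _ := (X j).d_deg (hx j trivial)
  d_sq x := funext fun j => (X j).d_sq _
  leibniz hx a := funext fun j => (X j).leibniz (hx j trivial) a

/-- The product of a family of dg modules. -/
abbrev product : DGMod K A := (productPre X).core

/-- The projection of a product onto a factor. -/
abbrev productπ (j : J) : CMap (product X) (X j) where
  toFun := LinearMap.proj j ∘ₗ (productPre X).finitePart.subtype
  mem := mem_homDeg_zero (fun _ _ hx => hx j trivial) fun _ _ => rfl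
  comm _ := rfl

variable {X}

lemma product_ext {x y : (product X).carrier}
    (h : ∀ j, (productπ X j).toFun x = (productπ X j).toFun y) : x = y :=
  Subtype.ext (funext h)

end Product

end DGMod

namespace PreDGMod

variable {V : PreDGMod A} {N : DGMod K A} {n : ℤ} {f : N.carrier →ₗ[K] V.carrier}

/-- The factorization through the finite part of a homogeneous linear map from a dg module. -/
abbrev coreLift (hdeg : ∀ k x, x ∈ N.deg k → f x ∈ V.deg (k + n))
    (hact : ∀ x a, f (N.act x a) = V.act (f x) a) : N.carrier →ₗ[K] V.core.carrier :=
  f.codRestrict V.finitePart (map_mem_finitePart hdeg hact)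

lemma coreLift_mem (hdeg : ∀ k x, x ∈ N.deg k → f x ∈ V.deg (k + n))
    (hact : ∀ x a, f (N.act x a) = V.act (f x) a) : coreLift hdeg hact ∈ homDeg N V.core n :=
  ⟨hdeg, fun x a => Subtype.ext (hact x a)⟩

end PreDGMod

namespace DGMod

variable {J : Type} {X : J → DGMod K A} {N : DGMod K A}

lemma exists_productLift {n : ℤ} {φ : ∀ j, N.carrier →ₗ[K] (X j).carrier}
    (hφ : ∀ j, φ j ∈ homDeg N (X j) n) :
    ∃ ψ ∈ homDeg N (product X) n, ∀ j x, (productπ X j).toFun (ψ x) = φ j x :=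
  ⟨_, PreDGMod.coreLift_mem (V := productPre X) (f := LinearMap.pi φ)
    (fun k x hx j _ => (hφ j).1 k x hx) (fun x a => funext fun j => (hφ j).2 x a), fun _ _ => rfl⟩

/-- The chain map into a product with given components. -/
def productLift (f : ∀ j, CMap N (X j)) : CMap N (product X) where
  toFun := (exists_productLift fun j => (f j).mem).choose
  mem := (exists_productLift fun j => (f j).mem).choose_spec.1
  comm x := product_ext fun j => by
    have h := (exists_productLift fun j => (f j).mem).choose_spec.2
    rw [h, (productπ X j).comm, h, (f j).comm]

lemma productπ_productLift (f : ∀ j, CMap N (X j)) (j : J) (x : N.carrier) :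
    (productπ X j).toFun ((productLift f).toFun x) = (f j).toFun x :=
  (exists_productLift fun j => (f j).mem).choose_spec.2 j x

end DGMod

section Coinduced

namespace DGAlgebra

/-- The involution `a ↦ (-1)^|a| a` of a dg algebra, which supplies the signs of dual modules. -/
def signInvolution (A : DGAlgebra K) : A.carrier →ₗ[K] A.carrier :=
  internalLift A.internal fun n => sgn n • LinearMap.id

lemma signInvolution_of_mem {n : ℤ} {a : A.carrier} (ha : a ∈ A.deg n) :
    A.signInvolution a = sgn n • a := by
  simp [signInvolution, internalLift_of_mem _ _ ha]

end DGAlgebra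

variable (A) (E : Type) [AddCommGroup E] [Module K E]

/-- The linear maps `A → E` of degree `n`, where `E` is concentrated in degree `0`. -/
abbrev coinducedDeg (n : ℤ) : Submodule K (A.carrier →ₗ[K] E) where
  carrier := {ψ | ∀ m, m ≠ -n → ∀ b ∈ A.deg m, ψ b = 0}
  add_mem' hψ hψ' m hm b hb := by simp [hψ m hm b hb, hψ' m hm b hb]
  zero_mem' _ _ _ _ := rfl
  smul_mem' c ψ hψ m hm b hb := by simp [hψ m hm b hb]

variable {A E}

lemma coinducedDeg_leibniz {i n m : ℤ} {ψ : A.carrier →ₗ[K] E} (hψ : ψ ∈ coinducedDeg A E i)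
    {a b : A.carrier} (ha : a ∈ A.deg n) (hb : b ∈ A.deg m) :
    sgn m • ψ (a * A.d b) = sgn (n + m) • ψ (A.d (a * b)) + sgn i • ψ (A.d a * b) := by
  have sgn_cancel : sgn (n + m) * sgn n = sgn m := by
    rw [add_comm, sgn_add, mul_assoc, sgn_mul_self, mul_one]
  have boundary_term : sgn (n + m) • ψ (A.d a * b) + sgn i • ψ (A.d a * b) = 0 := by
    by_cases hm : n + 1 + m = -i
    · obtain rfl : i = -(n + m + 1) := by omega
      simp [sgn_add, mul_comm (sgn n)]
    · simp [hψ _ hm _ (A.mul_mem (A.d_deg ha) hb)]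
  rw [A.leibniz ha, map_add, smul_add, map_zsmul, smul_smul, sgn_cancel, add_right_comm,
    boundary_term, zero_add]

variable (A E)

/-- All linear maps `A → E`, of which the coinduced module is the finite part. -/
abbrev coinducedPre : PreDGMod A where
  carrier := A.carrier →ₗ[K] E
  deg := coinducedDeg A E
  proj n := LinearMap.lcomp K E (internalProj A.internal (-n))
  proj_of_mem {n ψ} hψ := internal_hom_ext A.internal fun m b hb => by
    obtain rfl | hm := eq_or_ne m (-n)
    · simp [internalProj_of_mem A.internal hb]
    · simp [internalProj_of_mem_ne A.internal hb hm, hψ m hm b hb]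
  proj_of_mem_ne {m n ψ} hψ hmn := internal_hom_ext A.internal fun k b hb => by
    obtain rfl | hk := eq_or_ne k (-n)
    · simp [internalProj_of_mem A.internal hb, hψ _ (neg_injective.ne hmn.symm) b hb]
    · simp [internalProj_of_mem_ne A.internal hb hk]
  act := LinearMap.mk₂ K (fun ψ a => ψ ∘ₗ LinearMap.mulLeft K a)
    (by intros; ext; simp) (by intros; ext; simp)
    (by intros; ext; simp [add_mul]) (by intros; ext; simp [smul_mul_assoc])
  act_act x a b := by ext; simp
  act_deg {i j ψ a} hψ ha m hm b hb := hψ (j + m) (by omega) _ (A.mul_mem ha hb)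
  d := LinearMap.lcomp K E (A.d ∘ₗ A.signInvolution)
  d_deg {i ψ} hψ m hm b hb := by
    simp [A.signInvolution_of_mem hb, hψ (m + 1) (by omega) _ (A.d_deg hb)]
  d_sq ψ := internal_hom_ext A.internal fun m b hb => by
    simp [A.signInvolution_of_mem hb, A.signInvolution_of_mem (A.d_deg hb), A.d_sq]
  leibniz {i ψ} hψ a := internal_hom_ext A.internal fun m b hb => by
    induction a using internal_induction A.internal with
    | mem n a ha =>
      simpa [A.signInvolution_of_mem hb, A.signInvolution_of_mem (A.mul_mem ha hb)]
        using coinducedDeg_leibniz hψ ha hb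
    | zero => simp
    | add a a' ha ha' =>
      simp only [map_add, LinearMap.add_apply, smul_add] at ha ha' ⊢
      rw [ha, ha', add_add_add_comm]

/-- The dg module of linear maps `A → E`, for a `K`-module `E`: it is coinduced from `E`. -/
abbrev coinduced : DGMod K A := (coinducedPre A E).core

end Coinduced

section ChainCategory

namespace CMap

variable {M N : DGMod K A}

instance : Zero (CMap M N) where
  zero := ⟨0, zero_mem _, fun x => by simp⟩

instance : Add (CMap M N) where
  add f g := ⟨f.toFun + g.toFun, add_mem f.mem g.mem, fun x => by simp [f.comm, g.comm]⟩

instance : Neg (CMap M N) where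
  neg f := ⟨-f.toFun, neg_mem f.mem, fun x => by simp [f.comm]⟩

instance : Sub (CMap M N) where
  sub f g := ⟨f.toFun - g.toFun, sub_mem f.mem g.mem, fun x => by simp [f.comm, g.comm]⟩

instance : SMul ℕ (CMap M N) where
  smul n f := ⟨n • f.toFun, nsmul_mem f.mem n, fun x => by simp [f.comm]⟩

instance : SMul ℤ (CMap M N) where
  smul n f := ⟨n • f.toFun, zsmul_mem f.mem n, fun x => by simp [f.comm]⟩

instance : AddCommGroup (CMap M N) :=
  Function.Injective.addCommGroup CMap.toFun (fun _ _ => CMap.ext) rfl (fun _ _ => rfl)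
    (fun _ => rfl) (fun _ _ => rfl) (fun _ _ => rfl) (fun _ _ => rfl)

end CMap

instance : Preadditive (DGModCat K A) where
  homGroup M N := inferInstanceAs (AddCommGroup (CMap M N))
  add_comp _ _ _ f f' g := CMap.ext (LinearMap.comp_add f.toFun f'.toFun g.toFun)
  comp_add _ _ _ f g g' := CMap.ext (LinearMap.add_comp f.toFun g'.toFun g.toFun)

namespace DGModCat

/-- The isomorphism in `C(A)` given by a linear bijection compatible with all the structure. -/
abbrev isoOfEquiv {M N : DGModCat K A} (e : M.carrier ≃ₗ[K] N.carrier)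
    (hdeg : ∀ n x, x ∈ M.deg n ↔ e x ∈ N.deg n)
    (hact : ∀ x a, e (M.act x a) = N.act (e x) a) (hd : ∀ x, e (M.d x) = N.d (e x)) : M ≅ N where
  hom := ⟨e, mem_homDeg_zero (fun n x => (hdeg n x).1) hact, hd⟩
  inv := ⟨e.symm, mem_homDeg_zero (fun n x hx => (hdeg n _).2 (by simpa using hx))
    (fun x a => e.injective (by simp [hact])), fun x => e.injective (by simp [hd])⟩
  hom_inv_id := CMap.ext (LinearMap.ext e.symm_apply_apply)
  inv_hom_id := CMap.ext (LinearMap.ext e.apply_symm_apply)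

/-- The isomorphism `M[0] ≅ M`. -/
abbrev shiftZeroIso (M : DGModCat K A) : M.shift 0 ≅ M :=
  isoOfEquiv (M := M.shift 0) (LinearEquiv.refl K M.carrier) (fun n x => by simp)
    (fun _ _ => rfl) (fun x => by simp)

/-- The isomorphism `M[m + n] ≅ M[m][n]`. -/
abbrev shiftAddIso (M : DGModCat K A) (m n : ℤ) : M.shift (m + n) ≅ (M.shift m).shift n :=
  isoOfEquiv (M := M.shift (m + n)) (N := (M.shift m).shift n) (LinearEquiv.refl K M.carrier)
    (fun k x => by simp [add_assoc, add_comm n]) (fun _ _ => rfl)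
    (fun x => by simp [sgn_add, mul_smul, smul_comm (sgn m)])

lemma eqToHom_shift_toFun (M : DGModCat K A) {m n : ℤ} (h : m = n) (x : M.carrier) :
    (eqToHom (congrArg M.shift h) : CMap (M.shift m) (M.shift n)).toFun x = x := by
  subst h
  rfl

/-- The functor `M ↦ M[n]` of `C(A)`. -/
abbrev shiftBy (n : ℤ) : DGModCat K A ⥤ DGModCat K A where
  obj M := M.shift n
  map f := CMap.shift f n

instance : HasShift (DGModCat K A) ℤ := hasShiftMk _ _
  { F := shiftBy
    zero := NatIso.ofComponents shiftZeroIso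
    add m n := NatIso.ofComponents fun M => shiftAddIso M m n
    assoc_hom_app l m n M := CMap.ext <| LinearMap.ext fun x =>
      (eqToHom_shift_toFun M (add_assoc l m n) x).symm
    zero_add_hom_app n M := CMap.ext <| LinearMap.ext fun x =>
      (eqToHom_shift_toFun M (zero_add n) x).symm
    add_zero_hom_app n M := CMap.ext <| LinearMap.ext fun x =>
      (eqToHom_shift_toFun M (add_zero n) x).symm }

instance (n : ℤ) : (shiftFunctor (DGModCat K A) n).Additive where
  map_add := CMap.ext rfl

lemma shiftFunctorComm_hom_app_toFun (M : DGModCat K A) (m n : ℤ) (x : M.carrier) :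
    ((shiftFunctorComm (DGModCat K A) m n).hom.app M).toFun x = x := by
  rw [shiftFunctorComm_eq _ m n _ rfl, shiftFunctorAdd'_eq_shiftFunctorAdd, shiftFunctorAdd']
  simp only [Iso.trans_hom, Iso.symm_hom, NatTrans.comp_app, eqToIso.hom, eqToHom_app]
  exact eqToHom_shift_toFun M (add_comm m n) x

end DGModCat

end ChainCategory

section HomotopyCategory

namespace IsNullHomotopic

variable {L M N : DGModCat K A}

protected lemma zero : IsNullHomotopic (0 : CMap M N) :=
  ⟨0, zero_mem _, by simp; rfl⟩

protected lemma add {f g : M ⟶ N} : IsNullHomotopic f → IsNullHomotopic g →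
    IsNullHomotopic (f + g)
  | ⟨σ, hσ, hf⟩, ⟨τ, hτ, hg⟩ => ⟨σ + τ, add_mem hσ hτ, by
      rw [LinearMap.comp_add, LinearMap.add_comp, add_add_add_comm, ← hf, ← hg]; rfl⟩

protected lemma neg {f : M ⟶ N} : IsNullHomotopic f → IsNullHomotopic (-f)
  | ⟨σ, hσ, hf⟩ => ⟨-σ, neg_mem hσ, by
      rw [LinearMap.comp_neg, LinearMap.neg_comp, ← neg_add, ← hf]; rfl⟩

lemma comp_left (f : L ⟶ M) {g : M ⟶ N} : IsNullHomotopic g → IsNullHomotopic (f ≫ g)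
  | ⟨σ, hσ, hg⟩ => ⟨σ ∘ₗ f.toFun, by simpa using homDeg_comp hσ f.mem, LinearMap.ext fun x => by
      simp [DGModCat.comp_toFun, hg, f.comm]⟩

lemma comp_right {f : L ⟶ M} (g : M ⟶ N) : IsNullHomotopic f → IsNullHomotopic (f ≫ g)
  | ⟨σ, hσ, hf⟩ => ⟨g.toFun ∘ₗ σ, by simpa using homDeg_comp g.mem hσ, LinearMap.ext fun x => by
      simp [DGModCat.comp_toFun, hf, g.comm]⟩

protected lemma shift {f : M ⟶ N} (hf : IsNullHomotopic f) (n : ℤ) :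
    IsNullHomotopic (CMap.shift f n) := by
  obtain ⟨σ, hσ, hf⟩ := hf
  have shift_mem : σ ∈ homDeg (M.shift n) (N.shift n) (-1) :=
    ⟨fun k x hx => (add_right_comm k n (-1) ▸ hσ.1 _ _ hx : σ x ∈ N.deg (k + -1 + n)), hσ.2⟩
  exact ⟨sgn n • σ, zsmul_mem shift_mem _, hf.trans (LinearMap.ext fun x => by simp)⟩

end IsNullHomotopic

lemma htpyRel_iff_sub {M N : DGModCat K A} {f g : M ⟶ N} :
    htpyRel K A f g ↔ IsNullHomotopic (f - g : M ⟶ N) :=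
  Iff.rfl

instance : Congruence (htpyRel K A) where
  equivalence :=
    { refl f := by
        rw [htpyRel_iff_sub, sub_self]
        exact .zero
      symm {f g} h := by
        rw [htpyRel_iff_sub, ← neg_sub]
        exact IsNullHomotopic.neg h
      trans {f g h} hfg hgh := by
        rw [htpyRel_iff_sub, ← sub_add_sub_cancel f g h]
        exact IsNullHomotopic.add hfg hgh }
  comp_left f g g' h := by
    rw [htpyRel_iff_sub, ← Preadditive.comp_sub]
    exact IsNullHomotopic.comp_left f h
  comp_right {_ _ _ f f'} g h := by
    rw [htpyRel_iff_sub, ← Preadditive.sub_comp]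
    exact IsNullHomotopic.comp_right g h

lemma htpyRel_add ⦃M N : DGModCat K A⦄ (f f' g g' : M ⟶ N) (hf : htpyRel K A f f')
    (hg : htpyRel K A g g') : htpyRel K A (f + g) (f' + g') := by
  rw [htpyRel_iff_sub, add_sub_add_comm]
  exact IsNullHomotopic.add hf hg

instance : Preadditive (HtpyCat K A) := Quotient.preadditive _ htpyRel_add

instance : (htpyRel K A).IsCompatibleWithShift ℤ where
  condition n _ _ f g h := IsNullHomotopic.shift (f := f - g) h n

instance : (htpyQ K A).Full := inferInstanceAs (Quotient.functor _).Full

instance : (htpyQ K A).EssSurj := inferInstanceAs (Quotient.functor _).EssSurj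

instance : (htpyQ K A).Additive := Quotient.functor_additive _ htpyRel_add

instance : (htpyQ K A).CommShift ℤ :=
  inferInstanceAs ((Quotient.functor (htpyRel K A)).CommShift ℤ)

instance (n : ℤ) : (shiftFunctor (HtpyCat K A) n).Additive := by
  have : (htpyQ K A ⋙ shiftFunctor (HtpyCat K A) n).Additive :=
    Functor.additive_of_iso ((htpyQ K A).commShiftIso n)
  exact Functor.additive_of_full_essSurj_comp (htpyQ K A) _

lemma htpyQ_map_eq_iff {M N : DGModCat K A} {f g : M ⟶ N} :
    (htpyQ K A).map f = (htpyQ K A).map g ↔ IsNullHomotopic (f - g : M ⟶ N) :=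
  Quotient.functor_map_eq_iff (htpyRel K A) f g

lemma htpyQ_map_eq_zero_iff {M N : DGModCat K A} {f : M ⟶ N} :
    (htpyQ K A).map f = 0 ↔ IsNullHomotopic f := by
  rw [← (htpyQ K A).map_zero, htpyQ_map_eq_iff, sub_zero]

end HomotopyCategory

section Splitting

/-- A degreewise `A`-linear splitting of a sequence `L → M → N` of dg modules: the datum that makes
it a conflation, up to choice. -/
structure CMap.Splitting {L M N : DGMod K A} (u : CMap L M) (v : CMap M N) where
  r : M.carrier →ₗ[K] L.carrier
  s : N.carrier →ₗ[K] M.carrier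
  r_mem : r ∈ homDeg M L 0
  s_mem : s ∈ homDeg N M 0
  r_u (x : L.carrier) : r (u.toFun x) = x
  v_s (x : N.carrier) : v.toFun (s x) = x
  s_v (x : M.carrier) : s (v.toFun x) = x - u.toFun (r x)

namespace CMap.Splitting

variable {L M N : DGMod K A} {u : CMap L M} {v : CMap M N} (S : Splitting u v)
include S

lemma v_u (x : L.carrier) : v.toFun (u.toFun x) = 0 := by
  rw [← S.v_s (v.toFun _), S.s_v, S.r_u, sub_self, map_zero]

lemma r_s (x : N.carrier) : S.r (S.s x) = 0 := by
  have h := S.s_v (S.s x)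
  rw [S.v_s] at h
  rw [← S.r_u (S.r _), sub_eq_self.1 h.symm, map_zero]

lemma d_s (x : N.carrier) : M.d (S.s x) = S.s (N.d x) + u.toFun (S.r (M.d (S.s x))) := by
  have h := S.s_v (M.d (S.s x))
  rw [v.comm, S.v_s] at h
  rw [h, sub_add_cancel]

/-- The chain map `N → L[1]` measuring the failure of the splitting to respect differentials. -/
abbrev connecting : CMap N (L.shift 1) where
  toFun := -(S.r ∘ₗ M.d ∘ₗ S.s)
  mem := mem_homDeg_zero
    (fun n x hx => neg_mem (by
      simpa using S.r_mem.1 _ _ (M.d_deg (by simpa using S.s_mem.1 _ _ hx))))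
    fun x a => by
      induction x using internal_induction N.internal with
      | mem n x hx =>
        have leibniz_s := M.leibniz (by simpa using S.s_mem.1 _ _ hx) a
        simp [S.s_mem.2, S.r_mem.2, leibniz_s, S.r_s]
      | zero => simp
      | add x y hx hy => simp_all [add_comm]
  comm x := by
    have h := congrArg (fun y => S.r (M.d y)) (S.d_s x)
    simp only [M.d_sq, map_zero, map_add, ← u.comm, S.r_u] at h
    simpa using neg_eq_of_add_eq_zero_right h.symm

end CMap.Splitting

/-- `m ↦ m - u (r m)` vanishes on the image of `u`, hence factors through `v`. -/
lemma IsConflation.exists_splitting {L M N : DGModCat K A} {u : L ⟶ M} {v : M ⟶ N}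
    (h : IsConflation u v) : Nonempty (CMap.Splitting u v) := by
  obtain ⟨-, v_surjective, range_eq_ker, r, hr, r_u⟩ := h
  replace r_u (x) : r (u.toFun x) = x := LinearMap.congr_fun r_u x
  have v_u (x) : v.toFun (u.toFun x) = 0 :=
    LinearMap.mem_ker.1 (range_eq_ker ▸ LinearMap.mem_range_self u.toFun x)
  let p : M.carrier →ₗ[K] M.carrier := LinearMap.id - u.toFun ∘ₗ r
  have p_mem : p ∈ homDeg M M 0 :=
    sub_mem (mem_homDeg_zero (fun _ _ hx => hx) fun _ _ => rfl) (by
      simpa using homDeg_comp u.mem hr)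
  have ker_le : LinearMap.ker v.toFun ≤ LinearMap.ker p := by
    rw [← range_eq_ker]
    rintro _ ⟨x, rfl⟩
    simp [p, r_u]
  let s : N.carrier →ₗ[K] M.carrier :=
    (LinearMap.ker v.toFun).liftQ p ker_le ∘ₗ
      (v.toFun.quotKerEquivOfSurjective v_surjective).symm.toLinearMap
  have s_v (x) : s (v.toFun x) = p x := by
    have : (v.toFun.quotKerEquivOfSurjective v_surjective).symm (v.toFun x) =
        Submodule.Quotient.mk x := (LinearEquiv.symm_apply_eq _).2 rfl
    simp [s, this]
  have v_s (x) : v.toFun (s x) = x := by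
    obtain ⟨x, rfl⟩ := v_surjective x
    simp [s_v, p, v_u]
  have s_mem : s ∈ homDeg N M 0 := by
    refine mem_homDeg_zero (fun n x hx => ?_) fun x a => ?_
    · obtain ⟨x, rfl⟩ := v_surjective x
      rw [← DGMod.proj_of_mem hx, ← v.map_proj, s_v]
      simpa using p_mem.1 n _ (M.proj_mem n x)
    · obtain ⟨x, rfl⟩ := v_surjective x
      rw [← v.mem.2, s_v, s_v, p_mem.2]
  exact ⟨⟨r, s, hr, s_mem, r_u, v_s, s_v⟩⟩

end Splitting

section Pretriangulated

lemma isZero_htpyQ_obj {M : DGModCat K A} (h : IsNullHomotopic (𝟙 M : M ⟶ M)) :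
    Limits.IsZero ((htpyQ K A).obj M) := by
  rw [Limits.IsZero.iff_id_eq_zero, ← (htpyQ K A).map_id, htpyQ_map_eq_zero_iff]
  exact h

lemma isNullHomotopic_id_cone_id (M : DGModCat K A) :
    IsNullHomotopic (𝟙 (CMap.cone (𝟙 M) : DGModCat K A) : CMap _ _) := by
  refine ⟨LinearMap.inr K _ _ ∘ₗ LinearMap.fst K _ _, ⟨fun k x hx => ⟨zero_mem _, ?_⟩,
    fun x a => Prod.ext (by simp) rfl⟩, LinearMap.ext fun x => Prod.ext ?_ ?_⟩
  · simpa using hx.1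
  · change x.1 = M.d 0 + x.1 + 0
    simp
  · change x.2 = -M.d x.1 + (M.d x.1 + x.2)
    simp

lemma isZero_cone_id (M : DGModCat K A) :
    Limits.IsZero ((htpyQ K A).obj (CMap.cone (𝟙 M) : DGModCat K A)) :=
  isZero_htpyQ_obj (isNullHomotopic_id_cone_id M)

instance : Limits.HasZeroObject (HtpyCat K A) :=
  (isZero_cone_id (regularModule A)).hasZeroObject

/-- The isomorphism of triangles induced by an isomorphism of third vertices. -/
abbrev triangleIsoOfThird {C : Type*} [Category* C] [HasShift C ℤ] {X Y Z Z' : C} {f : X ⟶ Y}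
    {g : Y ⟶ Z} {h : Z ⟶ X⟦(1 : ℤ)⟧} {g' : Y ⟶ Z'} {h' : Z' ⟶ X⟦(1 : ℤ)⟧} (e : Z ≅ Z')
    (hg : g ≫ e.hom = g') (hh : e.hom ≫ h' = h) : Triangle.mk f g h ≅ Triangle.mk f g' h' :=
  Triangle.isoMk _ _ (Iso.refl X) (Iso.refl Y) e
    ((Category.comp_id f).trans (Category.id_comp f).symm)
    (hg.trans (Category.id_comp g').symm)
    ((congrArg (h ≫ ·) (CategoryTheory.Functor.map_id _ X)).trans
      ((Category.comp_id h).trans hh.symm))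

lemma triangle_shift_neg_one {C : Type*} [Category* C] [Preadditive C] [HasShift C ℤ]
    [∀ n : ℤ, (shiftFunctor C n).Additive] (T : Triangle C) :
    (Triangle.shiftFunctor C (-1)).obj T =
      Triangle.mk (-T.mor₁⟦(-1 : ℤ)⟧') (-T.mor₂⟦(-1 : ℤ)⟧')
        (-T.mor₃⟦(-1 : ℤ)⟧' ≫ (shiftFunctorComm C 1 (-1)).hom.app T.obj₁) := by
  simp [Triangle.shiftFunctor]

/-- The completion axiom for a pair of triangles: a commutative square between their first maps
extends to a morphism of triangles. -/
def CompletesMorphisms {C : Type*} [Category* C] [HasShift C ℤ] (T T' : Triangle C) : Prop :=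
  ∀ (a : T.obj₁ ⟶ T'.obj₁) (b : T.obj₂ ⟶ T'.obj₂), T.mor₁ ≫ b = a ≫ T'.mor₁ →
    ∃ c : T.obj₃ ⟶ T'.obj₃, T.mor₂ ≫ c = b ≫ T'.mor₂ ∧ T.mor₃ ≫ a⟦(1 : ℤ)⟧' = c ≫ T'.mor₃

lemma CompletesMorphisms.of_iso {C : Type*} [Category* C] [HasShift C ℤ] {S S' T T' : Triangle C}
    (e : T ≅ S) (e' : T' ≅ S') (h : CompletesMorphisms S S') : CompletesMorphisms T T' := by
  intro a b hab
  have hc₁ : S.mor₁ ≫ e.inv.hom₂ ≫ b ≫ e'.hom.hom₂ =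
      (e.inv.hom₁ ≫ a ≫ e'.hom.hom₁) ≫ S'.mor₁ := by
    rw [e.inv.comm₁_assoc, reassoc_of% hab, Category.assoc, Category.assoc, e'.hom.comm₁]
  obtain ⟨c, hc₂, hc₃⟩ := h _ _ hc₁
  let γ : T ⟶ T' := e.hom ≫ Triangle.homMk S S' _ _ c hc₁ hc₂ hc₃ ≫ e'.inv
  have γ_hom₁ : γ.hom₁ = a := by simp [γ]
  have γ_hom₂ : γ.hom₂ = b := by simp [γ]
  exact ⟨γ.hom₃, γ_hom₂ ▸ γ.comm₂, γ_hom₁ ▸ γ.comm₃⟩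

lemma CompletesMorphisms.map_of_full {C D : Type*} [Category* C] [Category* D] [HasShift C ℤ]
    [HasShift D ℤ] (F : C ⥤ D) [F.CommShift ℤ] [F.Full] {T T' : Triangle C}
    (h : ∀ (a : T.obj₁ ⟶ T'.obj₁) (b : T.obj₂ ⟶ T'.obj₂),
      F.map (T.mor₁ ≫ b) = F.map (a ≫ T'.mor₁) → ∃ c : T.obj₃ ⟶ T'.obj₃,
        T.mor₂ ≫ c = b ≫ T'.mor₂ ∧ T.mor₃ ≫ a⟦(1 : ℤ)⟧' = c ≫ T'.mor₃) :
    CompletesMorphisms (F.mapTriangle.obj T) (F.mapTriangle.obj T') := by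
  intro (a : F.obj T.obj₁ ⟶ F.obj T'.obj₁) (b : F.obj T.obj₂ ⟶ F.obj T'.obj₂)
    (hab : F.map T.mor₁ ≫ b = a ≫ F.map T'.mor₁)
  obtain ⟨a, rfl⟩ := F.map_surjective a
  obtain ⟨b, rfl⟩ := F.map_surjective b
  obtain ⟨c, hc₂, hc₃⟩ := h a b (by simpa using hab)
  have map_c₂ : F.map T.mor₂ ≫ F.map c = F.map b ≫ F.map T'.mor₂ := by
    simpa using congrArg F.map hc₂
  have map_c₃ : (F.map T.mor₃ ≫ (F.commShiftIso (1 : ℤ)).hom.app _) ≫ (F.map a)⟦(1 : ℤ)⟧' =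
      F.map c ≫ F.map T'.mor₃ ≫ (F.commShiftIso (1 : ℤ)).hom.app _ := by
    simpa using congrArg (F.map · ≫ (F.commShiftIso (1 : ℤ)).hom.app _) hc₃
  exact ⟨F.map c, map_c₂, map_c₃⟩

variable {L M N : DGModCat K A}

/-- The triangle `M → N → cone f → M[1]` of a chain map. -/
abbrev coneTriangle (f : M ⟶ N) : Triangle (DGModCat K A) :=
  Triangle.mk f (Z := CMap.cone f) (CMap.toCone f) (CMap.fromCone f)

/-- The distinguished triangles of `H(A)`: those isomorphic to the triangle of a chain map. -/
def distinguished (A : DGAlgebra K) : Set (Triangle (HtpyCat K A)) :=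
  {T | ∃ (M N : DGModCat K A) (f : M ⟶ N),
    Nonempty (T ≅ (htpyQ K A).mapTriangle.obj (coneTriangle f))}

lemma distinguished_of_iso {T T' : Triangle (HtpyCat K A)} (e : T' ≅ T) :
    T ∈ distinguished A → T' ∈ distinguished A
  | ⟨_, _, f, ⟨e'⟩⟩ => ⟨_, _, f, ⟨e ≪≫ e'⟩⟩

lemma coneTriangle_distinguished (f : M ⟶ N) :
    (htpyQ K A).mapTriangle.obj (coneTriangle f) ∈ distinguished A :=
  ⟨_, _, f, ⟨Iso.refl _⟩⟩

lemma distinguished_of_coneEquiv {T : Triangle (DGModCat K A)}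
    (φ : (CMap.cone T.mor₁ : DGModCat K A) ⟶ T.obj₃) (ψ : T.obj₃ ⟶ CMap.cone T.mor₁)
    (toCone_φ : CMap.toCone T.mor₁ ≫ φ = T.mor₂)
    (ψ_fromCone : ψ ≫ CMap.fromCone T.mor₁ = T.mor₃)
    (ψ_φ : ψ ≫ φ = 𝟙 _) (φ_ψ : IsNullHomotopic (φ ≫ ψ - 𝟙 _ : CMap.cone T.mor₁ ⟶ _)) :
    (htpyQ K A).mapTriangle.obj T ∈ distinguished A := by
  let e : (htpyQ K A).obj (CMap.cone T.mor₁) ≅ (htpyQ K A).obj T.obj₃ :=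
    { hom := (htpyQ K A).map φ
      inv := (htpyQ K A).map ψ
      hom_inv_id := by
        rw [← (htpyQ K A).map_comp, ← (htpyQ K A).map_id, htpyQ_map_eq_iff]
        exact φ_ψ
      inv_hom_id := by rw [← (htpyQ K A).map_comp, ψ_φ, (htpyQ K A).map_id] }
  refine ⟨_, _, T.mor₁, ⟨triangleIsoOfThird e.symm ?_ ?_⟩⟩
  · refine e.comp_inv_eq.2 ?_
    rw [← toCone_φ]
    exact (htpyQ K A).map_comp _ _
  · rw [← ψ_fromCone]
    exact (Category.assoc _ _ _).symm.trans
      (congrArg (· ≫ _) ((htpyQ K A).map_comp _ _).symm)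

lemma CMap.Splitting.distinguished {u : L ⟶ M} {v : M ⟶ N} (S : CMap.Splitting u v) :
    (htpyQ K A).mapTriangle.obj
      (Triangle.mk u v (S.connecting : N ⟶ (L.shift 1 : DGModCat K A))) ∈ distinguished A := by
  let φ : CMap (CMap.cone u) N :=
    { toFun := v.toFun ∘ₗ LinearMap.fst K _ _
      mem := mem_homDeg_zero (fun _ _ hx => v.map_deg hx.1) fun _ _ => v.mem.2 _ _
      comm x := by simp [v.comm, S.v_u] }
  let ψ : CMap N (CMap.cone u) :=
    { toFun := S.s.prod S.connecting.toFun
      mem := mem_homDeg_zero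
        (fun n x hx => ⟨by simpa using S.s_mem.1 n x hx, S.connecting.map_deg hx⟩)
        fun x a => Prod.ext (S.s_mem.2 x a) (S.connecting.mem.2 x a)
      comm x := Prod.ext
        (by
          change S.s (N.d x) = M.d (S.s x) + u.toFun (-(S.r (M.d (S.s x))))
          rw [map_neg]
          exact eq_add_neg_of_add_eq (S.d_s x).symm) (by
        simpa using S.connecting.comm x) }
  have φ_ψ : IsNullHomotopic (φ ≫ ψ - 𝟙 (CMap.cone u : DGModCat K A) : CMap _ _) := by
    refine ⟨-(LinearMap.inr K _ _ ∘ₗ S.r ∘ₗ LinearMap.fst K _ _),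
      neg_mem ⟨fun k x hx => ⟨zero_mem _, ?_⟩, fun x a => Prod.ext (by simp) (S.r_mem.2 x.1 a)⟩,
      LinearMap.ext fun x => Prod.ext ?_ ?_⟩
    · simpa using S.r_mem.1 k _ hx.1
    · change S.s (v.toFun x.1) - x.1 = M.d (-0) + u.toFun (-(S.r x.1)) + -0
      simp [S.s_v]
    · change -(S.r (M.d (S.s (v.toFun x.1)))) - x.2 =
        -L.d (-(S.r x.1)) + -(S.r (M.d x.1 + u.toFun x.2))
      simp only [S.s_v, map_sub, map_add, map_neg, S.r_u, ← u.comm]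
      abel
  exact distinguished_of_coneEquiv φ ψ (CMap.ext rfl) (CMap.ext rfl)
    (CMap.ext (LinearMap.ext S.v_s)) φ_ψ

lemma rotate_coneTriangle_distinguished (f : M ⟶ N) :
    (htpyQ K A).mapTriangle.obj (coneTriangle f).rotate ∈ distinguished A := by
  let S : CMap.Splitting (CMap.toCone f) (CMap.fromCone f) :=
    { r := LinearMap.fst K _ _
      s := LinearMap.inr K _ _
      r_mem := mem_homDeg_zero (fun _ _ hx => hx.1) fun _ _ => rfl
      s_mem := mem_homDeg_zero (fun _ _ hx => ⟨zero_mem _, hx⟩) fun _ _ => Prod.ext (by simp) rfl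
      r_u _ := rfl
      v_s _ := rfl
      s_v x := by simp [Prod.ext_iff] }
  have rotate_eq : (coneTriangle f).rotate =
      Triangle.mk (CMap.toCone f) (Y := CMap.cone f) (CMap.fromCone f) S.connecting :=
    congrArg (Triangle.mk (Y := CMap.cone f) (CMap.toCone f) (CMap.fromCone f))
      (CMap.ext (LinearMap.ext fun x => by
        change -(f.toFun x) = -(N.d 0 + f.toFun x)
        rw [map_zero, zero_add]))
  rw [rotate_eq]
  exact S.distinguished

lemma rotate_distinguished {T : Triangle (HtpyCat K A)} :
    T ∈ distinguished A → T.rotate ∈ distinguished A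
  | ⟨_, _, f, ⟨e⟩⟩ => distinguished_of_iso
      ((rotate _).mapIso e ≪≫ (htpyQ K A).mapTriangleRotateIso.app (coneTriangle f))
      (rotate_coneTriangle_distinguished f)

lemma shift_neg_one_coneTriangle_distinguished (f : M ⟶ N) :
    (htpyQ K A).mapTriangle.obj ((Triangle.shiftFunctor _ (-1)).obj (coneTriangle f)) ∈
      distinguished A := by
  rw [triangle_shift_neg_one]
  let g : M.shift (-1) ⟶ (N.shift (-1) : DGModCat K A) := -CMap.shift f (-1)
  have g_apply (x : M.carrier) : g.toFun x = -f.toFun x := rfl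
  let e : (CMap.cone g : DGModCat K A) ≅ (CMap.cone f).shift (-1) :=
    DGModCat.isoOfEquiv (M := CMap.cone g) (N := (CMap.cone f).shift (-1))
      (LinearEquiv.neg K (M := N.carrier × M.carrier))
      (fun n x => by simp [add_right_comm])
      (fun x a => Prod.ext (by simp) (by simp))
      (fun x => Prod.ext (by simp [g_apply]) (by simp))
  have e_inv : IsNullHomotopic (e.hom ≫ e.inv - 𝟙 (CMap.cone g : DGModCat K A) : CMap _ _) := by
    rw [e.hom_inv_id, sub_self]
    exact .zero
  let comm := (shiftFunctorComm (DGModCat K A) 1 (-1)).hom.app M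
  have e_fromCone : e.inv ≫ (CMap.fromCone g : _ ⟶ ((M.shift (-1)).shift 1 : DGModCat K A)) =
      -(CMap.shift (CMap.fromCone f) (-1) ≫ comm) := by
    refine CMap.ext (LinearMap.ext fun x => ?_)
    change -x.2 = -comm.toFun x.2
    exact congrArg Neg.neg (DGModCat.shiftFunctorComm_hom_app_toFun M 1 (-1) x.2).symm
  exact distinguished_of_coneEquiv e.hom e.inv rfl e_fromCone e.inv_hom_id e_inv

lemma shift_neg_one_distinguished {T : Triangle (HtpyCat K A)} :
    T ∈ distinguished A → (Triangle.shiftFunctor _ (-1)).obj T ∈ distinguished A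
  | ⟨_, _, f, ⟨e⟩⟩ => distinguished_of_iso
      ((Triangle.shiftFunctor _ (-1)).mapIso e ≪≫
        ((htpyQ K A).mapTriangleCommShiftIso (-1)).symm.app (coneTriangle f))
      (shift_neg_one_coneTriangle_distinguished f)

lemma invRotate_distinguished {T : Triangle (HtpyCat K A)} (hT : T ∈ distinguished A) :
    T.invRotate ∈ distinguished A :=
  distinguished_of_iso ((invRotateIsoRotateRotateShiftFunctorNegOne _).app T)
    (shift_neg_one_distinguished (rotate_distinguished (rotate_distinguished hT)))

lemma exists_cone_map {M' N' : DGModCat K A} {f : M ⟶ N} {f' : M' ⟶ N'} (a : M ⟶ M')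
    (b : N ⟶ N') (h : IsNullHomotopic (f ≫ b - a ≫ f' : M ⟶ N')) :
    ∃ c : (CMap.cone f : DGModCat K A) ⟶ CMap.cone f',
      CMap.toCone f ≫ c = b ≫ CMap.toCone f' ∧
        CMap.fromCone f ≫ CMap.shift a 1 = c ≫ CMap.fromCone f' := by
  obtain ⟨σ, hσ, h⟩ := h
  replace h (x) : b.toFun (f.toFun x) - f'.toFun (a.toFun x) = N'.d (σ x) + σ (M.d x) :=
    LinearMap.congr_fun h x
  let c : CMap (CMap.cone f) (CMap.cone f') :=
    { toFun := (b.toFun ∘ₗ LinearMap.fst K _ _ + σ ∘ₗ LinearMap.snd K _ _).prod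
        (a.toFun ∘ₗ LinearMap.snd K _ _)
      mem := mem_homDeg_zero
        (fun k x hx => ⟨add_mem (b.map_deg hx.1) (by simpa using hσ.1 _ _ hx.2),
          a.map_deg hx.2⟩)
        fun x y => Prod.ext (by simp [b.mem.2, hσ.2]) (a.mem.2 _ _)
      comm x := by
        refine Prod.ext ?_ ?_
        · change b.toFun (N.d x.1 + f.toFun x.2) + σ (-M.d x.2) =
            N'.d (b.toFun x.1 + σ x.2) + f'.toFun (a.toFun x.2)
          rw [map_add, sub_eq_iff_eq_add.1 (h x.2), map_neg, map_add, b.comm]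
          abel
        · simp [a.comm] }
  refine ⟨c, CMap.ext (LinearMap.ext fun x => Prod.ext ?_ ?_), CMap.ext rfl⟩
  · change b.toFun x + σ 0 = b.toFun x
    rw [map_zero, add_zero]
  · exact map_zero a.toFun

lemma completesMorphisms_of_distinguished {T T' : Triangle (HtpyCat K A)} :
    T ∈ distinguished A → T' ∈ distinguished A → CompletesMorphisms T T'
  | ⟨_, _, _, ⟨e⟩⟩, ⟨_, _, _, ⟨e'⟩⟩ => .of_iso e e' <| .map_of_full _ fun a b hab =>
      exists_cone_map a b (htpyQ_map_eq_iff.1 hab)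

instance : Pretriangulated (HtpyCat K A) where
  distinguishedTriangles := distinguished A
  isomorphic_distinguished _ hT _ e := distinguished_of_iso e hT
  contractible_distinguished := fun ⟨M⟩ =>
    distinguished_of_iso (triangleIsoOfThird (isZero_cone_id M).isoZero.symm
      ((isZero_cone_id M).eq_of_tgt _ _) ((Limits.isZero_zero _).eq_of_src _ _))
      (coneTriangle_distinguished (𝟙 M))
  distinguished_cocone_triangle f := by
    obtain ⟨f, rfl⟩ := (htpyQ K A).map_surjective f
    exact ⟨_, _, _, coneTriangle_distinguished f⟩
  rotate_distinguished_triangle T := ⟨rotate_distinguished, fun hT =>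
    distinguished_of_iso ((triangleRotation _).unitIso.app T) (invRotate_distinguished hT)⟩
  complete_distinguished_triangle_morphism _ _ hT hT' := completesMorphisms_of_distinguished hT hT'

end Pretriangulated

section Octahedron

lemma exists_distinguished_of_isConflation {L M N : DGModCat K A} {u : L ⟶ M} {v : M ⟶ N}
    (h : IsConflation u v) :
    ∃ w, Triangle.mk ((htpyQ K A).map u) ((htpyQ K A).map v) w ∈ distTriang (HtpyCat K A) :=
  let ⟨S⟩ := h.exists_splitting
  ⟨_, S.distinguished⟩

lemma nonempty_octahedron_map {C D : Type*} [Category* C] [HasShift C ℤ] [Category* D]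
    [Limits.HasZeroObject D] [HasShift D ℤ] [Preadditive D]
    [∀ n : ℤ, (shiftFunctor D n).Additive] [Pretriangulated D] (F : C ⥤ D) [F.CommShift ℤ]
    {X₁ X₂ X₃ Z₁₂ Z₂₃ Z₁₃ : C} {f : X₁ ⟶ X₂} {g : X₂ ⟶ X₃}
    {v₁₂ : X₂ ⟶ Z₁₂} {w₁₂ : Z₁₂ ⟶ X₁⟦(1 : ℤ)⟧} {v₂₃ : X₃ ⟶ Z₂₃} {w₂₃ : Z₂₃ ⟶ X₂⟦(1 : ℤ)⟧}
    {v₁₃ : X₃ ⟶ Z₁₃} {w₁₃ : Z₁₃ ⟶ X₁⟦(1 : ℤ)⟧}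
    (h₁₂ : Triangle.mk (F.map f) (F.map v₁₂)
      (F.map w₁₂ ≫ (F.commShiftIso (1 : ℤ)).hom.app X₁) ∈ distTriang D)
    (h₂₃ : Triangle.mk (F.map g) (F.map v₂₃)
      (F.map w₂₃ ≫ (F.commShiftIso (1 : ℤ)).hom.app X₂) ∈ distTriang D)
    (h₁₃ : Triangle.mk (F.map f ≫ F.map g) (F.map v₁₃)
      (F.map w₁₃ ≫ (F.commShiftIso (1 : ℤ)).hom.app X₁) ∈ distTriang D)
    {m₁ : Z₁₂ ⟶ Z₁₃} {m₃ : Z₁₃ ⟶ Z₂₃} (comm₁ : v₁₂ ≫ m₁ = g ≫ v₁₃) (comm₂ : m₁ ≫ w₁₃ = w₁₂)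
    (comm₃ : v₁₃ ≫ m₃ = v₂₃) (comm₄ : w₁₃ ≫ f⟦(1 : ℤ)⟧' = m₃ ≫ w₂₃)
    (mem : F.mapTriangle.obj (Triangle.mk m₁ m₃ (w₂₃ ≫ v₁₂⟦(1 : ℤ)⟧')) ∈ distTriang D) :
    Nonempty (Triangulated.Octahedron rfl h₁₂ h₂₃ h₁₃) :=
  ⟨{m₁ := F.map m₁
    m₃ := F.map m₃
    comm₁ := by simp only [← F.map_comp, comm₁]
    comm₂ := by rw [← F.map_comp_assoc, comm₂]
    comm₃ := by rw [← F.map_comp, comm₃]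
    comm₄ := by
      rw [Category.assoc, ← F.commShiftIso_hom_naturality, ← F.map_comp_assoc, comm₄,
        F.map_comp_assoc]
    mem := by
      rw [Category.assoc, ← F.commShiftIso_hom_naturality, ← F.map_comp_assoc]
      exact mem}⟩

variable {L M N : DGModCat K A} (f : L ⟶ M) (g : M ⟶ N)

/-- The map from the cone of `f` to the cone of `f ≫ g` in the octahedral axiom. -/
abbrev coneToConeComp : (CMap.cone f : DGModCat K A) ⟶ CMap.cone (f ≫ g) where
  toFun := g.toFun.prodMap LinearMap.id
  mem := mem_homDeg_zero (fun _ _ hx => ⟨g.map_deg hx.1, hx.2⟩)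
    fun _ _ => Prod.ext (g.mem.2 _ _) rfl
  comm x := Prod.ext (by simp [g.comm, DGModCat.comp_toFun]) rfl

/-- The map from the cone of `f ≫ g` to the cone of `g` in the octahedral axiom. -/
abbrev coneCompToCone : (CMap.cone (f ≫ g) : DGModCat K A) ⟶ CMap.cone g where
  toFun := LinearMap.id.prodMap f.toFun
  mem := mem_homDeg_zero (fun _ _ hx => ⟨hx.1, f.map_deg hx.2⟩)
    fun _ _ => Prod.ext rfl (f.mem.2 _ _)
  comm x := Prod.ext rfl (by simp [f.comm])

lemma coneToConeComp_distinguished :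
    (htpyQ K A).mapTriangle.obj (Triangle.mk (coneToConeComp f g) (coneCompToCone f g)
      (CMap.fromCone g ≫ CMap.shift (CMap.toCone f) 1)) ∈ distTriang (HtpyCat K A) := by
  let φ : (CMap.cone (coneToConeComp f g) : DGModCat K A) ⟶ CMap.cone g :=
    { toFun := (LinearMap.id.prodMap f.toFun) ∘ₗ LinearMap.fst K _ (M.carrier × L.carrier) +
        LinearMap.inr K N.carrier M.carrier ∘ₗ LinearMap.fst K M.carrier L.carrier ∘ₗ
          LinearMap.snd K (N.carrier × L.carrier) _
      mem := mem_homDeg_zero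
        (fun n _ hx => (g.cone.deg n).add_mem ⟨hx.1.1, f.map_deg hx.1.2⟩ ⟨zero_mem _, hx.2.1⟩)
        fun _ _ => Prod.ext (by simp) (by simp [f.mem.2])
      comm x := Prod.ext
        (by simp [DGModCat.comp_toFun, add_assoc])
        (by simp [f.comm]; abel) }
  let ψ : (CMap.cone g : DGModCat K A) ⟶ CMap.cone (coneToConeComp f g) :=
    { toFun := (LinearMap.inl K N.carrier L.carrier).prodMap (LinearMap.inl K M.carrier L.carrier)
      mem := mem_homDeg_zero (fun _ _ hx => ⟨⟨hx.1, zero_mem _⟩, hx.2, zero_mem _⟩)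
        fun _ _ => Prod.ext (Prod.ext rfl (by simp)) (Prod.ext rfl (by simp))
      comm x := Prod.ext (Prod.ext (by simp) (by simp)) (Prod.ext (by simp) (by simp)) }
  have φ_ψ : IsNullHomotopic
      (φ ≫ ψ - 𝟙 (CMap.cone (coneToConeComp f g) : DGModCat K A) : CMap _ _) := by
    refine ⟨LinearMap.inr K _ _ ∘ₗ LinearMap.inr K _ _ ∘ₗ
      (-LinearMap.snd K N.carrier L.carrier) ∘ₗ LinearMap.fst K _ _,
      ⟨fun k x hx => ⟨zero_mem _, zero_mem _, by simpa using hx.1.2⟩, fun x a => by ext <;> simp⟩,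
      LinearMap.ext fun x => Prod.ext (Prod.ext ?_ ?_) (Prod.ext ?_ ?_)⟩
    · change x.1.1 + 0 - x.1.1 = N.d 0 + g.toFun (f.toFun 0) + g.toFun 0 + 0
      simp
    · change 0 - x.1.2 = -L.d 0 + -x.1.2 + 0
      simp
    · change f.toFun x.1.2 + x.2.1 - x.2.1 = -(M.d 0 + f.toFun (-x.1.2)) + 0
      simp
    · change 0 - x.2.2 = - -L.d (-x.1.2) + -(-L.d x.1.2 + x.2.2)
      simp
  refine distinguished_of_coneEquiv φ ψ
    (CMap.ext (LinearMap.ext fun x => add_zero _))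
    (CMap.ext rfl) (CMap.ext (LinearMap.ext fun x => Prod.ext (add_zero _) ?_)) φ_ψ
  change f.toFun 0 + x.2 = x.2
  rw [map_zero, zero_add]

instance : IsTriangulated (HtpyCat K A) := IsTriangulated.mk' fun X₁ X₂ X₃ u v => by
  obtain ⟨f, rfl⟩ := (htpyQ K A).map_surjective u
  obtain ⟨g, rfl⟩ := (htpyQ K A).map_surjective v
  exact ⟨_, _, _, _, _, _, _, _, Iso.refl _, Iso.refl _, Iso.refl _,
    (Category.comp_id _).trans (Category.id_comp _).symm,
    (Category.comp_id _).trans (Category.id_comp _).symm, _, _, coneTriangle_distinguished f,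
    _, _, coneTriangle_distinguished g, _, _, coneTriangle_distinguished (f ≫ g),
    nonempty_octahedron_map (htpyQ K A) (m₁ := coneToConeComp f g) (m₃ := coneCompToCone f g)
      _ _ _ (CMap.ext rfl) (CMap.ext rfl)
      (CMap.ext (LinearMap.ext fun x => Prod.ext rfl (map_zero f.toFun)))
      (CMap.ext rfl) (coneToConeComp_distinguished f g)⟩

end Octahedron

section Acyclic

lemma isAcyclic_iff {M : DGMod K A} : IsAcyclic M ↔ ∀ x, M.d x = 0 → ∃ y, M.d y = x := by
  constructor
  · refine fun h x hx => LinearMap.mem_range.1 (DGMod.mem_of_proj_mem fun n => ?_)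
    obtain ⟨y, -, hy⟩ := h n _ (DGMod.proj_mem n x) (by rw [DGMod.d_proj, hx, map_zero])
    exact ⟨y, hy⟩
  · intro h n x hx hdx
    obtain ⟨y, hy⟩ := h x hdx
    exact ⟨M.proj (n - 1) y, DGMod.proj_mem _ _, by
      rw [DGMod.d_proj_sub_one, hy, DGMod.proj_of_mem hx]⟩

lemma isQis_iff {M N : DGMod K A} {f : CMap M N} :
    IsQis f ↔ (∀ x, M.d x = 0 → (∃ z, f.toFun x = N.d z) → ∃ w, x = M.d w) ∧
      ∀ y, N.d y = 0 → ∃ x z, M.d x = 0 ∧ y = f.toFun x + N.d z := by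
  have proj_eq_map_add (n : ℤ) {y : N.carrier} {x : M.carrier} {z : N.carrier}
      (h : y = f.toFun x + N.d z) :
      N.proj n y = f.toFun (M.proj n x) + N.d (N.proj (n - 1) z) := by
    rw [h, map_add, f.map_proj, DGMod.d_proj_sub_one]
  constructor
  · rintro ⟨hinj, hsurj⟩
    refine ⟨fun x hx ⟨z, hz⟩ => ?_, fun y hy => ?_⟩
    · obtain ⟨w, hw⟩ : x ∈ LinearMap.range M.d := DGMod.mem_of_proj_mem fun n => by
        obtain ⟨w, hw⟩ := hinj n _ (DGMod.proj_mem n x) (by rw [DGMod.d_proj, hx, map_zero])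
          ⟨N.proj (n - 1) z, by rw [f.map_proj, hz, DGMod.d_proj_sub_one]⟩
        exact ⟨w, hw.symm⟩
      exact ⟨w, hw.symm⟩
    · have hy : y ∈ (LinearMap.ker M.d).map f.toFun ⊔ LinearMap.range N.d :=
        DGMod.mem_of_proj_mem fun n => by
          obtain ⟨x, z, -, hx, h⟩ :=
            hsurj n _ (DGMod.proj_mem n y) (by rw [DGMod.d_proj, hy, map_zero])
          rw [h]
          exact Submodule.add_mem_sup ⟨x, hx, rfl⟩ ⟨z, rfl⟩
      obtain ⟨-, ⟨x, hx, rfl⟩, -, ⟨z, rfl⟩, h⟩ := Submodule.mem_sup.1 hy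
      exact ⟨x, z, hx, h.symm⟩
  · rintro ⟨hinj, hsurj⟩
    refine ⟨fun n x _ => hinj x, fun n y hy hdy => ?_⟩
    obtain ⟨x, z, hx, h⟩ := hsurj y hdy
    refine ⟨M.proj n x, N.proj (n - 1) z, DGMod.proj_mem n x,
      by rw [DGMod.d_proj, hx, map_zero], ?_⟩
    rw [← proj_eq_map_add n h, DGMod.proj_of_mem hy]

lemma isAcyclic_cone_iff {M N : DGMod K A} (f : CMap M N) : IsAcyclic f.cone ↔ IsQis f := by
  rw [isAcyclic_iff, isQis_iff]
  constructor
  · intro h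
    refine ⟨fun x hx ⟨z, hz⟩ => ?_, fun y hy => ?_⟩
    · obtain ⟨⟨v, w⟩, hw⟩ := h (-z, x) (Prod.ext (by simp [hz]) (by simp [hx]))
      exact ⟨-w, by rw [map_neg]; exact (congrArg Prod.snd hw).symm⟩
    · obtain ⟨⟨z, x⟩, hzx⟩ := h (y, 0) (Prod.ext (by simp [hy]) (by simp))
      exact ⟨x, z, neg_eq_zero.1 (congrArg Prod.snd hzx),
        (congrArg Prod.fst hzx).symm.trans (add_comm _ _)⟩
  · rintro ⟨hinj, hsurj⟩ ⟨y, x⟩ hyx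
    have d_add : N.d y + f.toFun x = 0 := congrArg Prod.fst hyx
    obtain ⟨w, rfl⟩ := hinj x (neg_eq_zero.1 (congrArg Prod.snd hyx))
      ⟨-y, by rw [map_neg, eq_neg_of_add_eq_zero_right d_add]⟩
    obtain ⟨x, z, hx, h⟩ := hsurj (y + f.toFun w) (by rw [map_add, ← f.comm, d_add])
    exact ⟨(z, x - w), Prod.ext
      (show N.d z + f.toFun (x - w) = y by rw [map_sub, eq_sub_of_add_eq h]; abel)
      (show -M.d (x - w) = M.d w by rw [map_sub, hx, zero_sub, neg_neg])⟩

lemma isQis_id (M : DGModCat K A) : IsQis (𝟙 M : M ⟶ M) :=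
  isQis_iff.2 ⟨fun x _ ⟨z, hz⟩ => ⟨z, hz⟩, fun y hy => ⟨y, 0, hy, by
    rw [map_zero, add_zero]
    rfl⟩⟩

lemma IsAcyclic.of_isQis {M N : DGMod K A} {f : CMap M N} (hf : IsQis f) (hM : IsAcyclic M) :
    IsAcyclic N :=
  isAcyclic_iff.2 fun y hy => by
    obtain ⟨x, z, hx, rfl⟩ := (isQis_iff.1 hf).2 y hy
    obtain ⟨w, rfl⟩ := isAcyclic_iff.1 hM x hx
    exact ⟨f.toFun w + z, by rw [map_add, f.comm]⟩

lemma IsAcyclic.shift {M : DGMod K A} (hM : IsAcyclic M) (n : ℤ) : IsAcyclic (M.shift n) :=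
  isAcyclic_iff.2 fun x hx => by
    have hx : sgn n • M.d x = 0 := hx
    obtain ⟨y, rfl⟩ := isAcyclic_iff.1 hM x (by
      rw [← sgn_smul_sgn_smul n (M.d x), hx, smul_zero])
    exact ⟨sgn n • y, show sgn n • M.d (sgn n • y) = M.d y by rw [map_zsmul, sgn_smul_sgn_smul]⟩

/-- The class of acyclic dg modules, in the homotopy category. -/
def acyclic (A : DGAlgebra K) : ObjectProperty (HtpyCat K A) := fun X => IsAcyclic X.as

lemma acyclic_htpyQ_obj_iff {M : DGModCat K A} : acyclic A ((htpyQ K A).obj M) ↔ IsAcyclic M :=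
  Iff.rfl

instance : (acyclic A).IsClosedUnderIsomorphisms where
  of_iso {X Y} e hX := by
    obtain ⟨f, hf⟩ := (htpyQ K A).map_surjective (X := X.as) (Y := Y.as) e.hom
    obtain ⟨g, hg⟩ := (htpyQ K A).map_surjective (X := Y.as) (Y := X.as) e.inv
    have hgf : (htpyQ K A).map (g ≫ f) = (htpyQ K A).map (𝟙 (Y.as : DGModCat K A)) := by
      rw [(htpyQ K A).map_comp, hf, hg]
      exact e.inv_hom_id
    obtain ⟨σ, -, hσ⟩ := htpyQ_map_eq_iff.1 hgf
    refine isAcyclic_iff.2 fun y hy => ?_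
    obtain ⟨w, hw⟩ := isAcyclic_iff.1 hX (g.toFun y) (by rw [← g.comm, hy, map_zero])
    have hσ : f.toFun (g.toFun y) - y = Y.as.d (σ y) + σ (Y.as.d y) := LinearMap.congr_fun hσ y
    rw [hy, map_zero, add_zero] at hσ
    exact ⟨f.toFun w - σ y, by rw [map_sub, ← f.comm, hw, ← hσ, sub_sub_cancel]⟩

instance : (acyclic A).IsTriangulated where
  exists_zero :=
    ⟨_, isZero_cone_id (regularModule A), (isAcyclic_cone_iff _).2 (isQis_id (regularModule A))⟩
  isStableUnderShiftBy n := ⟨fun X hX =>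
    (acyclic A).prop_of_iso (((htpyQ K A).commShiftIso n).app X.as)
      (acyclic_htpyQ_obj_iff.2 (IsAcyclic.shift hX n))⟩
  toIsTriangulatedClosed₂ := .mk' fun T ⟨M, N, f, ⟨e⟩⟩ h₁ h₃ => by
    have hM : IsAcyclic M := (acyclic A).prop_of_iso (Triangle.π₁.mapIso e) h₁
    have hcone : IsAcyclic (CMap.cone f) := (acyclic A).prop_of_iso (Triangle.π₃.mapIso e) h₃
    exact (acyclic A).prop_of_iso (Triangle.π₂.mapIso e).symm
      (acyclic_htpyQ_obj_iff.2 (hM.of_isQis ((isAcyclic_cone_iff f).1 hcone)))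

lemma acyclic_trW_map_iff {M N : DGModCat K A} (f : M ⟶ N) :
    (acyclic A).trW ((htpyQ K A).map f) ↔ IsQis f := by
  rw [← isAcyclic_cone_iff]
  exact (acyclic A).trW_iff_of_distinguished _ (coneTriangle_distinguished f)

lemma qis_eq_trW : qis K A = (acyclic A).trW := by
  ext X Y φ
  constructor
  · rintro ⟨f, rfl, hf⟩
    exact (acyclic_trW_map_iff f).2 hf
  · obtain ⟨f, rfl⟩ := (htpyQ K A).map_surjective (X := X.as) (Y := Y.as) φ
    exact fun h => ⟨f, rfl, (acyclic_trW_map_iff f).1 h⟩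

instance : (qis K A).HasLeftCalculusOfFractions := by rw [qis_eq_trW]; infer_instance

instance : (qis K A).IsCompatibleWithShift ℤ := by rw [qis_eq_trW]; infer_instance

instance : (qis K A).IsCompatibleWithTriangulation := by rw [qis_eq_trW]; infer_instance

instance : (derQ K A).CommShift ℤ := inferInstanceAs ((qis K A).Q.CommShift ℤ)

instance : (derQ K A).IsTriangulated := inferInstanceAs ((qis K A).Q.IsTriangulated)

instance : (derQ K A).IsLocalization (acyclic A).trW := by
  rw [← qis_eq_trW]
  exact inferInstanceAs ((qis K A).Q.IsLocalization (qis K A))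

lemma distinguished_derivedCat_iff (T : Triangle (DerivedCat K A)) :
    T ∈ (distinguishedTriangles : Set (Triangle (DerivedCat K A))) ↔
      ∃ T' ∈ (distinguishedTriangles : Set (Triangle (HtpyCat K A))),
        Nonempty (T ≅ (derQ K A).mapTriangle.obj T') :=
  ⟨fun ⟨T', e, h⟩ => ⟨T', h, ⟨e⟩⟩, fun ⟨T', h, ⟨e⟩⟩ => ⟨T', e, h⟩⟩

lemma isHtpyProj_iff_leftOrthogonal {P : DGModCat K A} :
    IsHtpyProj P ↔ (acyclic A).leftOrthogonal ((htpyQ K A).obj P) := by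
  constructor
  · intro h Y φ hY
    obtain ⟨f, rfl⟩ := (htpyQ K A).map_surjective (Y := Y.as) φ
    exact htpyQ_map_eq_zero_iff.2 (h _ hY f)
  · exact fun h N hN f => htpyQ_map_eq_zero_iff.1 (h ((htpyQ K A).map f) hN)

lemma isHtpyInj_iff_rightOrthogonal {I : DGModCat K A} :
    IsHtpyInj I ↔ (acyclic A).rightOrthogonal ((htpyQ K A).obj I) := by
  constructor
  · intro h X φ hX
    obtain ⟨f, rfl⟩ := (htpyQ K A).map_surjective (X := X.as) φ
    exact htpyQ_map_eq_zero_iff.2 (h _ hX f)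
  · exact fun h N hN f => htpyQ_map_eq_zero_iff.1 (h ((htpyQ K A).map f) hN)

end Acyclic

section HomotopicallyProjective

namespace DGAlgebra

lemma d_e_mul (A : DGAlgebra K) (i : A.ι) (a : A.carrier) : A.d (A.e i * a) = A.e i * A.d a := by
  simp [A.leibniz (A.e_deg i), A.d_e]

lemma internalProj_enough_left (A : DGAlgebra K) (i : A.ι) (a : A.carrier) :
    internalProj A.enough_left i a = A.e i * a := by
  induction a using internal_induction A.enough_left with
  | mem j a ha =>
    obtain rfl | hij := eq_or_ne j i
    · rw [internalProj_of_mem A.enough_left ha]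
      obtain ⟨b, -, rfl⟩ := ha
      simp [← mul_assoc, A.e_idem]
    · rw [internalProj_of_mem_ne A.enough_left ha hij]
      obtain ⟨b, -, rfl⟩ := ha
      simp [← mul_assoc, A.e_orth hij.symm]
  | zero => simp
  | add a b ha hb => rw [map_add, mul_add, ha, hb]

end DGAlgebra

lemma exists_homDeg_regularModule {N : DGMod K A} {n : ℤ} {w : A.ι → N.carrier}
    (hw : ∀ i, w i ∈ N.deg n) :
    ∃ σ ∈ homDeg (regularModule A) N n, ∀ i a, σ (A.e i * a) = N.act (w i) (A.e i * a) := by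
  have lift_e_mul (i : A.ι) (a : A.carrier) :
      internalLift A.enough_left (fun i => N.act (w i)) (A.e i * a) = N.act (w i) (A.e i * a) :=
    internalLift_of_mem A.enough_left (fun i => N.act (w i)) ⟨a, trivial, rfl⟩
  refine ⟨_, ⟨fun k a ha => ?_, fun a b => ?_⟩, lift_e_mul⟩
  · refine Submodule.mem_comap.1 (mem_of_internalProj_mem A.enough_left fun i => ?_)
    rw [Submodule.mem_comap, A.internalProj_enough_left, lift_e_mul, add_comm]
    exact N.act_deg (hw i) (by simpa using A.mul_mem (A.e_deg i) ha)
  · induction a using internal_induction A.enough_left with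
    | mem i a ha =>
      obtain ⟨a, -, rfl⟩ := ha
      change internalLift _ _ (A.e i * a * b) = N.act (internalLift _ _ (A.e i * a)) b
      rw [mul_assoc, lift_e_mul, lift_e_mul, N.act_act, mul_assoc]
    | zero => simp
    | add a a' ha ha' => simp only [map_add, LinearMap.add_apply, ha, ha']

lemma isHtpyProj_regularModule : IsHtpyProj (regularModule A) := by
  intro N hN f
  have f_e_mul (i : A.ι) (a : A.carrier) : f.toFun (A.e i * a) = N.act (f.toFun (A.e i)) a :=
    f.mem.2 (A.e i) a
  have exists_primitive (i : A.ι) : ∃ w ∈ N.deg (-1), N.d w = f.toFun (A.e i) := by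
    simpa using hN 0 (f.toFun (A.e i)) (f.map_deg (A.e_deg i)) (by rw [← f.comm]; simp [A.d_e])
  choose w w_deg d_w using exists_primitive
  obtain ⟨σ, hσ, σ_e_mul⟩ := exists_homDeg_regularModule w_deg
  refine ⟨σ, hσ, internal_hom_ext A.enough_left ?_⟩
  rintro i _ ⟨a, -, rfl⟩
  suffices f.toFun (A.e i * a) = N.d (σ (A.e i * a)) + σ (A.d (A.e i * a)) from this
  rw [A.d_e_mul, σ_e_mul, σ_e_mul, N.leibniz (w_deg i), d_w, A.d_e_mul, ← f_e_mul]
  simp [← mul_assoc, A.e_idem]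

lemma IsHtpyProj.shift {P : DGMod K A} (hP : IsHtpyProj P) (n : ℤ) : IsHtpyProj (P.shift n) :=
  isHtpyProj_iff_leftOrthogonal.2
    ((acyclic A).leftOrthogonal.prop_of_iso (((htpyQ K A).commShiftIso n).app P).symm
      ((acyclic A).leftOrthogonal.le_shift n _ (isHtpyProj_iff_leftOrthogonal.1 hP)))

lemma isNullHomotopic_of_coproductι {J : Type} {X : J → DGMod K A} {N : DGMod K A}
    {f : CMap (DGMod.coproduct X) N} (h : ∀ j, IsNullHomotopic
      (CategoryStruct.comp (obj := DGModCat K A) (DGMod.coproductι X j) f)) :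
    IsNullHomotopic f := by
  choose σ hσ h using h
  refine ⟨_, DGMod.coproductLift_mem hσ, DGMod.coproduct_hom_ext fun j x => ?_⟩
  refine (LinearMap.congr_fun (h j) x).trans ?_
  simp [DFinsupp.mapRange_single]

lemma IsHtpyProj.coproduct {J : Type} {X : J → DGMod K A} (h : ∀ j, IsHtpyProj (X j)) :
    IsHtpyProj (DGMod.coproduct X) := fun N hN _ =>
  isNullHomotopic_of_coproductι fun j => h j N hN _

end HomotopicallyProjective

section HomotopicallyInjective

lemma IsHtpyInj.shift {I : DGMod K A} (hI : IsHtpyInj I) (n : ℤ) : IsHtpyInj (I.shift n) :=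
  isHtpyInj_iff_rightOrthogonal.2
    ((acyclic A).rightOrthogonal.prop_of_iso (((htpyQ K A).commShiftIso n).app I).symm
      ((acyclic A).rightOrthogonal.le_shift n _ (isHtpyInj_iff_rightOrthogonal.1 hI)))

lemma isNullHomotopic_of_productπ {J : Type} {X : J → DGMod K A} {N : DGMod K A}
    {f : CMap N (DGMod.product X)} (h : ∀ j, IsNullHomotopic
      (CategoryStruct.comp (obj := DGModCat K A) f (DGMod.productπ X j))) :
    IsNullHomotopic f := by
  choose σ hσ h using h
  obtain ⟨τ, hτ, π_τ⟩ := DGMod.exists_productLift hσ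
  refine ⟨τ, hτ, LinearMap.ext fun x => DGMod.product_ext fun j => ?_⟩
  refine (LinearMap.congr_fun (h j) x).trans ?_
  rw [LinearMap.add_apply, LinearMap.add_apply, map_add, LinearMap.comp_apply (DGMod.product X).d,
    (DGMod.productπ X j).comm, π_τ, LinearMap.comp_apply τ, π_τ]
  rfl

lemma IsHtpyInj.product {J : Type} {X : J → DGMod K A} (h : ∀ j, IsHtpyInj (X j)) :
    IsHtpyInj (DGMod.product X) := fun N hN _ =>
  isNullHomotopic_of_productπ fun j => h j N hN _

variable {E : Type} [AddCommGroup E] [Module K E] {N : DGMod K A}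

lemma compr₂_proj_mem_coinducedDeg (n : ℤ) (θ : N.carrier →ₗ[K] E) (k : ℤ) (x : N.carrier)
    (hx : x ∈ N.deg k) : N.act.compr₂ (θ ∘ₗ N.proj n) x ∈ coinducedDeg A E (k + -n) :=
  fun m hm b hb => by
    simp [DGMod.proj_of_mem_ne (N.act_deg hx hb) (show k + m ≠ n by omega)]

lemma compr₂_proj_act (n : ℤ) (θ : N.carrier →ₗ[K] E) (x : N.carrier) (a : A.carrier) :
    N.act.compr₂ (θ ∘ₗ N.proj n) (N.act x a) =
      (coinducedPre A E).act (N.act.compr₂ (θ ∘ₗ N.proj n) x) a := by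
  ext b
  simp [N.act_act]

/-- The map `x ↦ (a ↦ θ ((x·a)ₙ))` of degree `-n` from a dg module to a coinduced module, under
the adjunction between restriction to `K` and coinduction. -/
def toCoinduced (n : ℤ) (θ : N.carrier →ₗ[K] E) : N.carrier →ₗ[K] (coinduced A E).carrier :=
  PreDGMod.coreLift (compr₂_proj_mem_coinducedDeg n θ) (compr₂_proj_act n θ)

lemma toCoinduced_apply (n : ℤ) (θ : N.carrier →ₗ[K] E) (x : N.carrier) (a : A.carrier) :
    (toCoinduced n θ x).1 a = θ (N.proj n (N.act x a)) :=
  rfl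

lemma toCoinduced_mem (n : ℤ) (θ : N.carrier →ₗ[K] E) :
    toCoinduced n θ ∈ homDeg N (coinduced A E) (-n) :=
  PreDGMod.coreLift_mem (compr₂_proj_mem_coinducedDeg n θ) (compr₂_proj_act n θ)

lemma d_toCoinduced (n : ℤ) (θ : N.carrier →ₗ[K] E) (x : N.carrier) :
    (coinduced A E).d (toCoinduced n θ x) =
      sgn n • (toCoinduced n θ (N.d x) - toCoinduced (n - 1) (θ ∘ₗ N.d) x) := by
  suffices (coinduced A E).d ∘ₗ toCoinduced n θ =
      sgn n • (toCoinduced n θ ∘ₗ N.d - toCoinduced (n - 1) (θ ∘ₗ N.d)) from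
    LinearMap.congr_fun this x
  refine internal_hom_ext N.internal fun k x hx => Subtype.ext
    (internal_hom_ext A.internal fun m b hb => ?_)
  change θ (N.proj n (N.act x (A.d (A.signInvolution b)))) =
    sgn n • (θ (N.proj n (N.act (N.d x) b)) - θ (N.d (N.proj (n - 1) (N.act x b))))
  rw [DGMod.d_proj_sub_one, N.leibniz hx, A.signInvolution_of_mem hb, map_add, map_add,
    sub_add_cancel_left]
  obtain rfl | hn := eq_or_ne (k + (m + 1)) n
  · simp [sgn_add, smul_smul, mul_right_comm]
  · simp [DGMod.proj_of_mem_ne (N.act_deg hx (A.d_deg hb)) hn]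

lemma exists_eq_toCoinduced {n : ℤ} {f : N.carrier →ₗ[K] (coinduced A E).carrier}
    (hf : f ∈ homDeg N (coinduced A E) (-n)) : ∃ φ, f = toCoinduced n φ := by
  let φ : N.carrier →ₗ[K] E := internalLift N.unital fun i =>
    LinearMap.applyₗ (A.e i) ∘ₗ (coinducedPre A E).finitePart.subtype ∘ₗ f
  have f_act (x : N.carrier) (a b : A.carrier) : (f (N.act x a)).1 b = (f x).1 (a * b) :=
    congrArg (fun ψ => ψ.1 b) (hf.2 x a)
  have φ_act_e (x : N.carrier) (i : A.ι) : φ (N.act x (A.e i)) = (f x).1 (A.e i) := by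
    refine (internalLift_of_mem N.unital _ ⟨x, trivial, rfl⟩).trans ?_
    exact (f_act x (A.e i) (A.e i)).trans (by rw [A.e_idem])
  have φ_act (x : N.carrier) (a : A.carrier) : φ (N.act x a) = (f x).1 a := by
    induction a using internal_induction A.enough_right with
    | mem i a ha =>
      obtain ⟨b, -, rfl⟩ := ha
      rw [LinearMap.mulRight_apply, ← N.act_act, φ_act_e, f_act]
    | zero => simp
    | add a b ha hb => rw [map_add, map_add, map_add, ha, hb]
  refine ⟨φ, internal_hom_ext N.internal fun k x hx => Subtype.ext
    (internal_hom_ext A.internal fun m b hb => ?_)⟩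
  rw [toCoinduced_apply]
  obtain rfl | hn := eq_or_ne (k + m) n
  · rw [DGMod.proj_of_mem (N.act_deg hx hb), φ_act]
  · rw [DGMod.proj_of_mem_ne (N.act_deg hx hb) hn, map_zero]
    exact hf.1 k x hx m (by omega) b hb

lemma map_proj_eq_zero_of_toCoinduced_eq_d {n : ℤ} {θ : N.carrier →ₗ[K] E} {x : N.carrier}
    {v : (coinduced A E).carrier} (h : toCoinduced n θ x = (coinduced A E).d v) :
    θ (N.proj n x) = 0 := by
  obtain ⟨F, hF⟩ := N.exists_sum_act_e x
  rw [← hF, map_sum, map_sum]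
  refine Finset.sum_eq_zero fun i _ => ?_
  rw [← toCoinduced_apply, h]
  change v.1 (A.d (A.signInvolution (A.e i))) = 0
  simp [A.signInvolution_of_mem (A.e_deg i), A.d_e]

lemma exists_comp_eq_of_ker_le (hE : Module.Injective K E) {X Y : Type} [AddCommGroup X]
    [Module K X] [AddCommGroup Y] [Module K Y] {u : X →ₗ[K] Y} {φ : X →ₗ[K] E}
    (h : LinearMap.ker u ≤ LinearMap.ker φ) : ∃ θ : Y →ₗ[K] E, θ ∘ₗ u = φ := by
  obtain ⟨θ, hθ⟩ := hE.out ((LinearMap.ker u).liftQ u le_rfl)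
    (LinearMap.ker_eq_bot.1 (Submodule.ker_liftQ_eq_bot _ _ _ le_rfl))
    ((LinearMap.ker u).liftQ φ h)
  exact ⟨θ, LinearMap.ext fun x => hθ (Submodule.Quotient.mk x)⟩

lemma isHtpyInj_coinduced (hE : Module.Injective K E) : IsHtpyInj (coinduced A E) := by
  intro N hN f
  obtain ⟨φ, hφ⟩ := exists_eq_toCoinduced (n := 0) (by simpa using f.mem)
  have φ_proj_d (x : N.carrier) : φ (N.proj 0 (N.d x)) = 0 := by
    have h := f.comm x
    rw [hφ, d_toCoinduced, sgn_zero, one_smul, eq_comm, sub_eq_self] at h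
    rw [← DGMod.d_proj_sub_one]
    exact map_proj_eq_zero_of_toCoinduced_eq_d (v := 0) (h.trans (map_zero _).symm)
  obtain ⟨θ, hθ⟩ := exists_comp_eq_of_ker_le hE (u := N.d) (φ := φ ∘ₗ N.proj 0) fun x hx => by
    obtain ⟨y, rfl⟩ := isAcyclic_iff.1 hN x hx
    exact φ_proj_d y
  refine ⟨toCoinduced 1 θ, toCoinduced_mem 1 θ, LinearMap.ext fun x => ?_⟩
  have homotopy : (coinduced A E).d (toCoinduced 1 θ x) + toCoinduced 1 θ (N.d x) =
      toCoinduced 0 (φ ∘ₗ N.proj 0) x := by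
    rw [d_toCoinduced, hθ]
    simp
  refine Eq.trans (Subtype.ext (LinearMap.ext fun a => ?_)) homotopy.symm
  rw [hφ, toCoinduced_apply, toCoinduced_apply, LinearMap.comp_apply,
    DGMod.proj_of_mem (DGMod.proj_mem 0 _)]

/-- The chain map `x ↦ (a ↦ φ ((x·a)ₙ))` defined by a linear map `φ` that vanishes on boundaries. -/
def CMap.toCoinduced (n : ℤ) (φ : N.carrier →ₗ[K] E) (hφ : φ ∘ₗ N.d = 0) :
    CMap N ((coinduced A E).shift (-n)) where
  toFun := _root_.toCoinduced n φ
  mem := mem_homDeg_zero (toCoinduced_mem n φ).1 (toCoinduced_mem n φ).2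
  comm x := by
    have h : _root_.toCoinduced (n - 1) (φ ∘ₗ N.d) x = 0 := by
      rw [hφ]
      rfl
    change _ = sgn (-n) • (coinduced A E).d (_root_.toCoinduced n φ x)
    rw [d_toCoinduced, h, sub_zero, sgn_neg, sgn_smul_sgn_smul]

end HomotopicallyInjective

section Orthogonals

open Limits

variable {C D : Type*} [Category* C] [Category* D] [HasShift C ℤ]
  {P : ObjectProperty C}

lemma exists_shift_map_comp_eq [P.IsStableUnderShift ℤ] {X Y : C} {f : X ⟶ Y}
    (hf : ∀ N, P N → ∀ g : X ⟶ N, ∃ g', f ≫ g' = g) {N : C} (hN : P N) (g : X⟦(1 : ℤ)⟧ ⟶ N) :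
    ∃ g', f⟦(1 : ℤ)⟧' ≫ g' = g := by
  obtain ⟨h, hh⟩ := (shiftFunctor C (1 : ℤ)).map_surjective (g ≫ (shiftNegShift N (1 : ℤ)).inv)
  obtain ⟨h', rfl⟩ := hf _ (P.le_shift (-1) _ hN) h
  refine ⟨h'⟦(1 : ℤ)⟧' ≫ (shiftNegShift N (1 : ℤ)).hom, ?_⟩
  rw [← Category.assoc, ← Functor.map_comp, hh, Category.assoc, Iso.inv_hom_id, Category.comp_id]

variable [Preadditive C] [HasZeroObject C] [∀ n : ℤ, (shiftFunctor C n).Additive]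
  [Pretriangulated C]

lemma trW_leftOrthogonal_eq_isLocal [P.IsStableUnderShift ℤ] :
    P.leftOrthogonal.trW = P.isLocal := by
  ext X Y f
  refine ⟨fun hf N hN => ?_, fun hf => ?_⟩
  · have hN' : P.leftOrthogonal.trW.isLocal N := by
      rw [ObjectProperty.isLocal_trW]
      exact fun _ g hX => hX g hN
    exact hN' f hf
  · obtain ⟨Z, v, w, hT⟩ := distinguished_cocone_triangle f
    refine ObjectProperty.trW.mk _ hT fun N (g : Z ⟶ N) hN => ?_
    have v_g : v ≫ g = 0 := (hf N hN).1 (by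
      change f ≫ v ≫ g = f ≫ 0
      rw [← Category.assoc, show f ≫ v = 0 from comp_distTriang_mor_zero₁₂ _ hT, zero_comp,
        comp_zero])
    obtain ⟨l, rfl⟩ : ∃ l, g = w ≫ l := Triangle.yoneda_exact₃ _ hT g v_g
    obtain ⟨m, rfl⟩ := exists_shift_map_comp_eq (fun N hN => (hf N hN).2) hN l
    change w ≫ f⟦(1 : ℤ)⟧' ≫ m = (0 : Z ⟶ N)
    rw [← Category.assoc, show w ≫ f⟦(1 : ℤ)⟧' = 0 from comp_distTriang_mor_zero₃₁ _ hT, zero_comp]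

lemma trW_rightOrthogonal_eq_isColocal [P.IsStableUnderShift ℤ] :
    P.rightOrthogonal.trW = P.isColocal := by
  ext X Y f
  refine ⟨fun hf N hN => ?_, fun hf => ?_⟩
  · have hN' : P.rightOrthogonal.trW.isColocal N := by
      rw [ObjectProperty.isColocal_trW]
      exact fun _ g hX => hX g hN
    exact hN' f hf
  · obtain ⟨Z, u, w, hT⟩ := distinguished_cocone_triangle₁ f
    refine ObjectProperty.trW.mk' _ hT fun N (g : N ⟶ Z) hN => ?_
    have g_u : g ≫ u = 0 := (hf N hN).1 (by
      change (g ≫ u) ≫ f = 0 ≫ f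
      rw [Category.assoc, show u ≫ f = 0 from comp_distTriang_mor_zero₁₂ _ hT, zero_comp,
        comp_zero])
    obtain ⟨l, hl⟩ : ∃ l, g⟦(1 : ℤ)⟧' = l ≫ w := Triangle.coyoneda_exact₁ _ hT _ (by
      change g⟦(1 : ℤ)⟧' ≫ u⟦(1 : ℤ)⟧' = 0
      rw [← Functor.map_comp, g_u, Functor.map_zero])
    obtain ⟨m, rfl⟩ := (hf _ (P.le_shift 1 _ hN)).2 l
    change g = (0 : N ⟶ Z)
    apply (shiftFunctor C (1 : ℤ)).map_injective
    rw [hl, Category.assoc, show f ≫ w = 0 from comp_distTriang_mor_zero₂₃ _ hT, comp_zero,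
      Functor.map_zero]

lemma exists_leftOrthogonal_trW_of_isLocal [P.IsStableUnderShift ℤ] {M T : C} {g : M ⟶ T}
    (hg : P.isLocal g) (hT : P T) : ∃ (X : C) (f : X ⟶ M), P.leftOrthogonal X ∧ P.trW f := by
  rw [← trW_leftOrthogonal_eq_isLocal] at hg
  obtain ⟨X, f, h, hfgh, hX⟩ := (ObjectProperty.trW_iff' _ _).1 hg
  exact ⟨X, f, hX, ObjectProperty.trW.mk _ hfgh hT⟩

lemma exists_rightOrthogonal_trW_of_isColocal [P.IsStableUnderShift ℤ] {M T : C} {g : T ⟶ M}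
    (hg : P.isColocal g) (hT : P T) : ∃ (Z : C) (f : M ⟶ Z), P.rightOrthogonal Z ∧ P.trW f := by
  rw [← trW_rightOrthogonal_eq_isColocal] at hg
  obtain ⟨Z, f, h, hgfh, hZ⟩ := (ObjectProperty.trW_iff _ _).1 hg
  exact ⟨Z, f, hZ, ObjectProperty.trW.mk' _ hgfh hT⟩

section Adjoints

variable [P.IsTriangulated] (L : C ⥤ D) [L.IsLocalization P.trW]

variable {L} {F : D ⥤ C}

lemma leftOrthogonal_obj_of_adjunction (adj : F ⊣ L) (Y : D) : P.leftOrthogonal (F.obj Y) := by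
  rw [← ObjectProperty.isColocal_trW]
  intro N N' w hw
  have := Localization.inverts L P.trW w hw
  have comp_w : (fun f : F.obj Y ⟶ N => f ≫ w) =
      (adj.homEquiv Y N').symm ∘ (fun g => g ≫ L.map w) ∘ adj.homEquiv Y N := by
    ext f
    change f ≫ w = (adj.homEquiv Y N').symm (adj.homEquiv Y N f ≫ L.map w)
    rw [← adj.homEquiv_naturality_right, Equiv.symm_apply_apply]
  rw [comp_w]
  exact (adj.homEquiv Y N').symm.bijective.comp
    (((asIso (L.map w)).homToEquiv.bijective).comp (adj.homEquiv Y N).bijective)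

lemma rightOrthogonal_obj_of_adjunction (adj : L ⊣ F) (Y : D) : P.rightOrthogonal (F.obj Y) := by
  rw [← ObjectProperty.isLocal_trW]
  intro N N' w hw
  have := Localization.inverts L P.trW w hw
  have w_comp : (fun f : N' ⟶ F.obj Y => w ≫ f) =
      adj.homEquiv N Y ∘ (fun g => L.map w ≫ g) ∘ (adj.homEquiv N' Y).symm := by
    ext f
    change w ≫ f = adj.homEquiv N Y (L.map w ≫ (adj.homEquiv N' Y).symm f)
    rw [← adj.homEquiv_naturality_left_symm, Equiv.apply_symm_apply]
  rw [w_comp]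
  exact (adj.homEquiv N Y).bijective.comp
    (((asIso (L.map w)).symm.homFromEquiv.bijective).comp (adj.homEquiv N' Y).symm.bijective)

variable [IsTriangulated C]

include P in
lemma isIso_unit_of_isLocalization_trW (adj : F ⊣ L) : IsIso adj.unit := by
  have := Localization.essSurj L P.trW
  have bijective_unit_comp (Y : D) (N : C) :
      Function.Bijective (fun g : L.obj (F.obj Y) ⟶ L.obj N => adj.unit.app Y ≫ g) := by
    rw [← Function.Bijective.of_comp_iff _
      ((leftOrthogonal_obj_of_adjunction (P := P) adj Y).map_bijective_of_isTriangulated L N)]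
    have h := (adj.homEquiv Y N).bijective
    rwa [show ⇑(adj.homEquiv Y N) = _ from funext (adj.homEquiv_unit Y N)] at h
  have (Y : D) : IsIso (adj.unit.app Y) := isIso_of_coyoneda_map_bijective _ fun T => by
    let e := L.objObjPreimageIso T
    simpa [Function.comp_def] using
      (e.homToEquiv.bijective.comp (bijective_unit_comp Y _)).comp e.symm.homToEquiv.bijective
  exact NatIso.isIso_of_isIso_app _

include P in
lemma isIso_counit_of_isLocalization_trW (adj : L ⊣ F) : IsIso adj.counit := by
  have := Localization.essSurj L P.trW
  have bijective_comp_counit (Y : D) (N : C) :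
      Function.Bijective (fun g : L.obj N ⟶ L.obj (F.obj Y) => g ≫ adj.counit.app Y) := by
    rw [← Function.Bijective.of_comp_iff _
      ((rightOrthogonal_obj_of_adjunction (P := P) adj Y).map_bijective_of_isTriangulated L N)]
    have h := (adj.homEquiv N Y).symm.bijective
    rwa [show ⇑(adj.homEquiv N Y).symm = _ from funext (adj.homEquiv_counit N Y)] at h
  have (Y : D) : IsIso (adj.counit.app Y) := isIso_of_yoneda_map_bijective _ fun T => by
    let e := L.objObjPreimageIso T
    simpa [Function.comp_def] using
      (e.homFromEquiv.bijective.comp (bijective_comp_counit Y _)).comp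
        e.symm.homFromEquiv.bijective
  exact NatIso.isIso_of_isIso_app _

variable (L)

lemma isRightAdjoint_of_exists_trW
    (h : ∀ Y : C, ∃ (X : C) (f : X ⟶ Y), P.leftOrthogonal X ∧ P.trW f) : L.IsRightAdjoint := by
  have := Localization.essSurj L P.trW
  have exists_iso (Y : D) : ∃ X, P.leftOrthogonal X ∧ Nonempty (L.obj X ≅ Y) := by
    obtain ⟨X, f, hX, hf⟩ := h (L.objPreimage Y)
    exact ⟨X, hX, ⟨Localization.isoOfHom L P.trW f hf ≪≫ L.objObjPreimageIso Y⟩⟩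
  choose X hX e using exists_iso
  exact (Adjunction.adjunctionOfEquivLeft (fun Y N =>
    (Equiv.ofBijective _ ((hX Y).map_bijective_of_isTriangulated L N)).trans
      (e Y).some.homFromEquiv) (by simp)).isRightAdjoint

lemma isLeftAdjoint_of_exists_trW
    (h : ∀ Y : C, ∃ (Z : C) (f : Y ⟶ Z), P.rightOrthogonal Z ∧ P.trW f) : L.IsLeftAdjoint := by
  have := Localization.essSurj L P.trW
  have exists_iso (Y : D) : ∃ Z, P.rightOrthogonal Z ∧ Nonempty (L.obj Z ≅ Y) := by
    obtain ⟨Z, f, hZ, hf⟩ := h (L.objPreimage Y)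
    exact ⟨Z, hZ, ⟨(Localization.isoOfHom L P.trW f hf).symm ≪≫ L.objObjPreimageIso Y⟩⟩
  choose Z hZ e using exists_iso
  let e' (N : C) (Y : D) : (N ⟶ Z Y) ≃ (L.obj N ⟶ Y) :=
    (Equiv.ofBijective _ ((hZ Y).map_bijective_of_isTriangulated L N)).trans
      (e Y).some.homToEquiv
  have e'_comp {N N' : C} {Y : D} (f : N ⟶ N') (g : N' ⟶ Z Y) :
      e' N Y (f ≫ g) = L.map f ≫ e' N' Y g := by simp [e']
  exact (Adjunction.adjunctionOfEquivRight (fun N Y => (e' N Y).symm)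
    (fun N N' Y f g => by
      rw [Equiv.symm_apply_eq, e'_comp, Equiv.apply_symm_apply])).isLeftAdjoint

end Adjoints

end Orthogonals

section Telescopes

open Limits

lemma exists_seq_sub_map_succ {G : ℕ → Type*} [∀ n, AddCommGroup (G n)]
    {t : ∀ n, G (n + 1) → G n} (ht : ∀ n, Function.Surjective (t n)) (x : G 0) (h : ∀ n, G n) :
    ∃ g : ∀ n, G n, g 0 = x ∧ ∀ n, g n - t n (g (n + 1)) = h n := by
  choose s hs using ht
  refine ⟨fun n => Nat.rec x (fun k y => s k (y - h k)) n, rfl, fun n => ?_⟩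
  simp only [hs, sub_sub_cancel]

variable {C : Type*} [Category* C] [Preadditive C] {P : ObjectProperty C} {X : ℕ → C}

section Colimit

variable {u : ∀ n, X n ⟶ X (n + 1)} {c : Cofan X} {φ : c.pt ⟶ c.pt}

lemma inj_comp_telescope_comp (hφ : ∀ n, c.inj n ≫ φ = c.inj n - u n ≫ c.inj (n + 1)) {N : C}
    (f : c.pt ⟶ N) (n : ℕ) : c.inj n ≫ φ ≫ f = c.inj n ≫ f - u n ≫ c.inj (n + 1) ≫ f := by
  rw [← Category.assoc, hφ, Preadditive.sub_comp, Category.assoc]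

lemma exists_telescope_comp_eq (hc : IsColimit c)
    (hφ : ∀ n, c.inj n ≫ φ = c.inj n - u n ≫ c.inj (n + 1)) (hu : ∀ n, P.isLocal (u n))
    {N : C} (hN : P N) (x : X 0 ⟶ N) (g : c.pt ⟶ N) :
    ∃ f, c.inj 0 ≫ f = x ∧ φ ≫ f = g := by
  obtain ⟨k, hk₀, hk⟩ := exists_seq_sub_map_succ (fun n => (hu n N hN).2) x fun n => c.inj n ≫ g
  refine ⟨Cofan.IsColimit.desc hc k, by rw [Cofan.IsColimit.fac, hk₀],
    Cofan.IsColimit.hom_ext hc _ _ fun n => ?_⟩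
  rw [inj_comp_telescope_comp hφ, Cofan.IsColimit.fac, Cofan.IsColimit.fac, ← hk]

lemma eq_zero_of_telescope_comp_eq_zero (hc : IsColimit c)
    (hφ : ∀ n, c.inj n ≫ φ = c.inj n - u n ≫ c.inj (n + 1)) (hu : ∀ n, P.isLocal (u n))
    {N : C} (hN : P N) {f : c.pt ⟶ N} (hf : φ ≫ f = 0) (hf₀ : c.inj 0 ≫ f = 0) : f = 0 := by
  refine Cofan.IsColimit.hom_ext hc _ _ fun n => ?_
  rw [comp_zero]
  induction n with
  | zero => exact hf₀
  | succ n ih =>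
    have u_comp := inj_comp_telescope_comp hφ f n
    rw [hf, comp_zero, ih, zero_sub, eq_comm, neg_eq_zero] at u_comp
    exact (hu n N hN).1 (u_comp.trans comp_zero.symm)

variable [HasShift C ℤ] [HasZeroObject C] [∀ n : ℤ, (shiftFunctor C n).Additive]
  [Pretriangulated C] [P.IsStableUnderShift ℤ]

lemma isLocal_inj_comp_of_telescope (hc : IsColimit c)
    (hφ : ∀ n, c.inj n ≫ φ = c.inj n - u n ≫ c.inj (n + 1)) (hu : ∀ n, P.isLocal (u n))
    {T : C} {a : c.pt ⟶ T} {b : T ⟶ c.pt⟦(1 : ℤ)⟧} (hT : Triangle.mk φ a b ∈ distTriang C) :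
    P.isLocal (c.inj 0 ≫ a) := by
  have φ_a : φ ≫ a = 0 := comp_distTriang_mor_zero₁₂ _ hT
  have b_φ : b ≫ φ⟦(1 : ℤ)⟧' = 0 := comp_distTriang_mor_zero₃₁ _ hT
  intro N hN
  refine ⟨(injective_iff_map_eq_zero (Preadditive.leftComp N (c.inj 0 ≫ a))).2 fun k hk => ?_,
    fun x => ?_⟩
  · have a_k : a ≫ k = 0 := eq_zero_of_telescope_comp_eq_zero hc hφ hu hN
      (by rw [← Category.assoc, φ_a, zero_comp]) ((Category.assoc _ _ _).symm.trans hk)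
    obtain ⟨l, rfl⟩ : ∃ l, k = b ≫ l := Triangle.yoneda_exact₃ _ hT k a_k
    obtain ⟨m, rfl⟩ := exists_shift_map_comp_eq (fun N hN g =>
      (exists_telescope_comp_eq hc hφ hu hN 0 g).imp fun _ h => h.2) hN l
    rw [← Category.assoc, b_φ, zero_comp]
  · obtain ⟨f, rfl, hf⟩ := exists_telescope_comp_eq hc hφ hu hN x 0
    obtain ⟨l, rfl⟩ : ∃ l, f = a ≫ l := Triangle.yoneda_exact₂ _ hT f hf
    exact ⟨l, Category.assoc _ _ _⟩

lemma exists_leftOrthogonal_trW_of_telescope (hc : IsColimit c)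
    (hφ : ∀ n, c.inj n ≫ φ = c.inj n - u n ≫ c.inj (n + 1)) (hu : ∀ n, P.isLocal (u n))
    {T : C} {a : c.pt ⟶ T} {b : T ⟶ c.pt⟦(1 : ℤ)⟧} (hT : Triangle.mk φ a b ∈ distTriang C)
    (hP : P T) : ∃ (Z : C) (f : Z ⟶ X 0), P.leftOrthogonal Z ∧ P.trW f :=
  exists_leftOrthogonal_trW_of_isLocal (isLocal_inj_comp_of_telescope hc hφ hu hT) hP

end Colimit

section Limit

variable {u : ∀ n, X (n + 1) ⟶ X n} {c : Fan X} {φ : c.pt ⟶ c.pt}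

lemma comp_telescope_comp_proj (hφ : ∀ n, φ ≫ c.proj n = c.proj n - c.proj (n + 1) ≫ u n) {N : C}
    (f : N ⟶ c.pt) (n : ℕ) :
    (f ≫ φ) ≫ c.proj n = f ≫ c.proj n - (f ≫ c.proj (n + 1)) ≫ u n := by
  rw [Category.assoc, hφ, Preadditive.comp_sub, Category.assoc]

lemma exists_comp_telescope_eq (hc : IsLimit c)
    (hφ : ∀ n, φ ≫ c.proj n = c.proj n - c.proj (n + 1) ≫ u n) (hu : ∀ n, P.isColocal (u n))
    {N : C} (hN : P N) (x : N ⟶ X 0) (g : N ⟶ c.pt) :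
    ∃ f, f ≫ c.proj 0 = x ∧ f ≫ φ = g := by
  obtain ⟨k, hk₀, hk⟩ := exists_seq_sub_map_succ (fun n => (hu n N hN).2) x fun n => g ≫ c.proj n
  refine ⟨Fan.IsLimit.lift hc k, by rw [Fan.IsLimit.fac, hk₀],
    Fan.IsLimit.hom_ext hc _ _ fun n => ?_⟩
  rw [comp_telescope_comp_proj hφ, Fan.IsLimit.fac, Fan.IsLimit.fac, ← hk]

lemma eq_zero_of_comp_telescope_eq_zero (hc : IsLimit c)
    (hφ : ∀ n, φ ≫ c.proj n = c.proj n - c.proj (n + 1) ≫ u n) (hu : ∀ n, P.isColocal (u n))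
    {N : C} (hN : P N) {f : N ⟶ c.pt} (hf : f ≫ φ = 0) (hf₀ : f ≫ c.proj 0 = 0) : f = 0 := by
  refine Fan.IsLimit.hom_ext hc _ _ fun n => ?_
  rw [zero_comp]
  induction n with
  | zero => exact hf₀
  | succ n ih =>
    have comp_u := comp_telescope_comp_proj hφ f n
    rw [hf, zero_comp, ih, zero_sub, eq_comm, neg_eq_zero] at comp_u
    exact (hu n N hN).1 (comp_u.trans zero_comp.symm)

variable [HasShift C ℤ] [HasZeroObject C] [∀ n : ℤ, (shiftFunctor C n).Additive]
  [Pretriangulated C] [P.IsStableUnderShift ℤ]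

lemma isColocal_comp_proj_of_telescope (hc : IsLimit c)
    (hφ : ∀ n, φ ≫ c.proj n = c.proj n - c.proj (n + 1) ≫ u n) (hu : ∀ n, P.isColocal (u n))
    {T : C} {a : T ⟶ c.pt} {b : c.pt ⟶ T⟦(1 : ℤ)⟧} (hT : Triangle.mk a φ b ∈ distTriang C) :
    P.isColocal (a ≫ c.proj 0) := by
  have a_φ : a ≫ φ = 0 := comp_distTriang_mor_zero₁₂ _ hT
  have φ_b : φ ≫ b = 0 := comp_distTriang_mor_zero₂₃ _ hT
  intro N hN
  refine ⟨(injective_iff_map_eq_zero (Preadditive.rightComp N (a ≫ c.proj 0))).2 fun k hk => ?_,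
    fun x => ?_⟩
  · have k_a : k ≫ a = 0 := eq_zero_of_comp_telescope_eq_zero hc hφ hu hN
      (by rw [Category.assoc, a_φ, comp_zero]) ((Category.assoc _ _ _).trans hk)
    obtain ⟨l, hl⟩ : ∃ l, k⟦(1 : ℤ)⟧' = l ≫ b := Triangle.coyoneda_exact₁ _ hT _ (by
      change k⟦(1 : ℤ)⟧' ≫ a⟦(1 : ℤ)⟧' = 0
      rw [← Functor.map_comp, k_a, Functor.map_zero])
    obtain ⟨m, -, rfl⟩ := exists_comp_telescope_eq hc hφ hu (P.le_shift 1 _ hN) 0 l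
    apply (shiftFunctor C (1 : ℤ)).map_injective
    rw [hl, Category.assoc, φ_b, comp_zero, Functor.map_zero]
  · obtain ⟨f, rfl, hf⟩ := exists_comp_telescope_eq hc hφ hu hN x 0
    obtain ⟨l, rfl⟩ : ∃ l, f = l ≫ a := Triangle.coyoneda_exact₂ _ hT f hf
    exact ⟨l, (Category.assoc _ _ _).symm⟩

lemma exists_rightOrthogonal_trW_of_telescope (hc : IsLimit c)
    (hφ : ∀ n, φ ≫ c.proj n = c.proj n - c.proj (n + 1) ≫ u n) (hu : ∀ n, P.isColocal (u n))
    {T : C} {a : c.pt ⟶ T} {b : T ⟶ c.pt⟦(1 : ℤ)⟧} (hT : Triangle.mk φ a b ∈ distTriang C)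
    (hP : P T) : ∃ (Z : C) (f : X 0 ⟶ Z), P.rightOrthogonal Z ∧ P.trW f :=
  exists_rightOrthogonal_trW_of_isColocal
    (isColocal_comp_proj_of_telescope hc hφ hu (inv_rot_of_distTriang _ hT))
    (P.le_shift (-1) _ hP)

end Limit

end Telescopes

section Ghost

/-- A chain map is a ghost if it vanishes on homology, that is, sends cycles to boundaries. -/
def IsGhost {M N : DGMod K A} (f : CMap M N) : Prop := ∀ x, M.d x = 0 → ∃ z, f.toFun x = N.d z

namespace IsGhost

variable {L M N P : DGModCat K A}

lemma of_homogeneous {f : M ⟶ N} (h : ∀ n i x, x ∈ M.deg n → M.act x (A.e i) = x →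
    M.d x = 0 → ∃ z, f.toFun x = N.d z) : IsGhost f := by
  intro x hx
  suffices x ∈ (LinearMap.range N.d).comap f.toFun from this.imp fun _ hz => hz.symm
  refine DGMod.mem_of_proj_mem fun n => ?_
  obtain ⟨F, hF⟩ := M.exists_sum_act_e (M.proj n x)
  rw [← hF]
  refine sum_mem fun i _ => ?_
  obtain ⟨z, hz⟩ := h n i (M.act (M.proj n x) (A.e i))
    (M.act_e_mem_deg (DGMod.proj_mem n x) i) (by rw [M.act_act, A.e_idem])
    (by simp [M.leibniz (DGMod.proj_mem n x), DGMod.d_proj, hx, A.d_e])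
  exact ⟨z, hz.symm⟩

lemma comp_right {f : M ⟶ N} (hf : IsGhost f) (g : N ⟶ P) : IsGhost (f ≫ g : M ⟶ P) :=
  fun x hx => by
    obtain ⟨z, hz⟩ := hf x hx
    exact ⟨g.toFun z, (congrArg g.toFun hz).trans (g.comm z)⟩

lemma comp_left (g : L ⟶ M) {f : M ⟶ N} (hf : IsGhost f) : IsGhost (g ≫ f : L ⟶ N) :=
  fun x hx => hf (g.toFun x) (by rw [← g.comm, hx, map_zero])

lemma shift {f : M ⟶ N} (hf : IsGhost f) (n : ℤ) : IsGhost (CMap.shift f n) := fun x hx => by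
  have hx : sgn n • M.d x = 0 := hx
  obtain ⟨z, hz⟩ := hf x (by rw [← sgn_smul_sgn_smul n (M.d x), hx, smul_zero])
  exact ⟨sgn n • z, hz.trans (show N.d z = sgn n • N.d (sgn n • z) by
    rw [map_zsmul, sgn_smul_sgn_smul])⟩

lemma isQis_id_sub {s : M ⟶ M} (hs : IsGhost s) : IsQis (𝟙 M - s : M ⟶ M) := by
  refine isQis_iff.2 ⟨fun x hx ⟨z, hz⟩ => ?_, fun y hy => ?_⟩
  · obtain ⟨w, hw⟩ := hs x hx
    have hz : x - s.toFun x = M.d z := hz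
    exact ⟨z + w, by rw [map_add, ← hz, ← hw, sub_add_cancel]⟩
  · obtain ⟨w, hw⟩ := hs y hy
    exact ⟨y, w, hy, show y = y - s.toFun y + M.d w by rw [hw, sub_add_cancel]⟩

variable {J : Type} {X : J → DGMod K A}

lemma coproductDesc {f : ∀ j, CMap (X j) N} (hf : ∀ j, IsGhost (f j)) :
    IsGhost (DGMod.coproductDesc f) := by
  classical
  intro x hx
  choose z hz using fun j => hf j (x j) (DFunLike.congr_fun hx j)
  refine ⟨∑ j ∈ x.support, z j, ?_⟩
  rw [map_sum]
  simp only [DFinsupp.lsum_apply_apply, DFinsupp.sumAddHom_apply, DFinsupp.sum]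
  exact Finset.sum_congr rfl fun j _ => hz j

lemma productLift {f : ∀ j, CMap N (X j)} (hf : ∀ j, IsGhost (f j)) :
    IsGhost (DGMod.productLift f) := by
  refine of_homogeneous fun n i x hx hxi hdx => ?_
  choose z hz using fun j => hf j x hdx
  have proj_z_deg (j : J) : (X j).proj (n - 1) (z j) ∈ (X j).deg (n - 1) := DGMod.proj_mem _ _
  let v : ∀ j, (X j).carrier := fun j => (X j).act ((X j).proj (n - 1) (z j)) (A.e i)
  have hv : v ∈ (DGMod.productPre X).finitePart :=
    PreDGMod.mem_finitePart (n := n - 1) (i := i)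
      (fun j _ => (X j).act_e_mem_deg (proj_z_deg j) i)
      (funext fun j => by simp [v, (X j).act_act, A.e_idem])
  refine ⟨⟨v, hv⟩, DGMod.product_ext fun j => ?_⟩
  rw [DGMod.productπ_productLift]
  change (f j).toFun x = (X j).d (v j)
  simp only [v, (X j).leibniz (proj_z_deg j), A.d_e, map_zero, smul_zero, add_zero]
  rw [DGMod.d_proj_sub_one, ← hz, DGMod.proj_of_mem ((f j).map_deg hx), ← (f j).mem.2, hxi]

end IsGhost

/-- The chain map `a ↦ z·a` classifying a cycle `z` of degree `n`. -/
abbrev CMap.ofCycle {M : DGMod K A} {n : ℤ} {z : M.carrier} (hz : z ∈ M.deg n) (hdz : M.d z = 0) :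
    CMap ((regularModule A).shift (-n)) M where
  toFun := M.act z
  mem := mem_homDeg_zero
    (fun k a ha => add_neg_cancel_comm_assoc n k ▸ M.act_deg hz ha)
    fun a b => (M.act_act z a b).symm
  comm a := by simp [M.leibniz hz, hdz, sgn_neg]

lemma exists_isHtpyProj_isGhost_toCone (M : DGMod K A) :
    ∃ (P : DGMod K A) (f : CMap P M), IsHtpyProj P ∧ IsGhost f.toCone := by
  let J := {q : ℤ × M.carrier // q.2 ∈ M.deg q.1 ∧ M.d q.2 = 0}
  let X : J → DGMod K A := fun q => (regularModule A).shift (-q.1.1)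
  let g (q : J) : CMap (X q) M := CMap.ofCycle q.2.1 q.2.2
  refine ⟨DGMod.coproduct X, DGMod.coproductDesc g,
    .coproduct fun q => isHtpyProj_regularModule.shift _,
    .of_homogeneous fun n i x hx hxi hdx => ?_⟩
  let p := (DGMod.coproductι X ⟨(n, x), hx, hdx⟩).toFun (A.e i)
  have map_p : (DGMod.coproductDesc g).toFun p = x := by simpa [p, g] using hxi
  have d_p : (DGMod.coproduct X).d p = 0 := by
    rw [← CMap.comm]
    simp [X, A.d_e]
  exact ⟨(0, p), Prod.ext
    (show x = M.d 0 + (DGMod.coproductDesc g).toFun p by rw [map_p, map_zero, zero_add])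
    (show 0 = -(DGMod.coproduct X).d p by rw [d_p, neg_zero])⟩

lemma exists_injective_embedding (X : Type) [AddCommGroup X] [Module K X] :
    ∃ (E : Type) (_ : AddCommGroup E) (_ : Module K E) (φ : X →ₗ[K] E),
      Module.Injective K E ∧ Function.Injective φ := by
  let E := Injective.under (ModuleCat.of K X)
  have : Injective (ModuleCat.of K E) := inferInstanceAs (Injective E)
  exact ⟨E, inferInstance, inferInstance, (Injective.ι (ModuleCat.of K X)).hom,
    Module.injective_module_of_injective_object K E,
    (ModuleCat.mono_iff_injective _).1 inferInstance⟩

lemma exists_isHtpyInj_isGhost_fromCone (M : DGMod K A) :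
    ∃ (I : DGMod K A) (f : CMap M I), IsHtpyInj I ∧ IsGhost f.fromCone := by
  obtain ⟨E, _, _, θ, hE, hθ⟩ :=
    exists_injective_embedding (K := K) (M.carrier ⧸ LinearMap.range M.d)
  let φ : M.carrier →ₗ[K] E := θ ∘ₗ (LinearMap.range M.d).mkQ
  have φ_comp_d : φ ∘ₗ M.d = 0 := by
    rw [LinearMap.comp_assoc, LinearMap.range_mkQ_comp, LinearMap.comp_zero]
  have ker_φ : LinearMap.ker φ = LinearMap.range M.d := by
    rw [LinearMap.ker_comp_of_ker_eq_bot _ (LinearMap.ker_eq_bot.2 hθ), Submodule.ker_mkQ]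
  let X (n : ℤ) : DGMod K A := (coinduced A E).shift (-n)
  let g (n : ℤ) : CMap M (X n) := CMap.toCoinduced n φ φ_comp_d
  refine ⟨DGMod.product X, DGMod.productLift g, .product fun n => (isHtpyInj_coinduced hE).shift _,
    .of_homogeneous ?_⟩
  rintro n i ⟨w, x⟩ ⟨-, hx⟩ - hd
  have hgx : (X (n + 1)).d ((DGMod.productπ X (n + 1)).toFun w) + (g (n + 1)).toFun x = 0 := by
    rw [← CMap.comm, ← DGMod.productπ_productLift g, ← map_add]
    exact (congrArg (DGMod.productπ X (n + 1)).toFun (congrArg Prod.fst hd)).trans (map_zero _)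
  have φ_x : φ (M.proj (n + 1) x) = 0 := map_proj_eq_zero_of_toCoinduced_eq_d
    (v := -(sgn (-(n + 1)) • (DGMod.productπ X (n + 1)).toFun w)) (by
      rw [map_neg, map_zsmul]
      exact eq_neg_of_add_eq_zero_right hgx)
  rw [DGMod.proj_of_mem hx, ← LinearMap.mem_ker, ker_φ] at φ_x
  obtain ⟨y, rfl⟩ := φ_x
  exact ⟨-y, by simp⟩

end Ghost

section Resolutions

section Coproduct

variable {J : Type} (X : J → DGModCat K A)

lemma coproductι_comp_coproductDesc {N : DGModCat K A} (f : ∀ j, X j ⟶ N) (j : J) :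
    CategoryStruct.comp (obj := DGModCat K A) (DGMod.coproductι X j) (DGMod.coproductDesc f) =
      f j :=
  CMap.ext (LinearMap.ext fun x => by simp [DGModCat.comp_toFun])

lemma productLift_comp_productπ {N : DGModCat K A} (f : ∀ j, N ⟶ X j) (j : J) :
    CategoryStruct.comp (obj := DGModCat K A) (DGMod.productLift f) (DGMod.productπ X j) = f j :=
  CMap.ext (LinearMap.ext (DGMod.productπ_productLift f j))

/-- The coproduct of dg modules as a cofan in the homotopy category. -/
abbrev coproductCofan : Limits.Cofan fun j => (htpyQ K A).obj (X j) :=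
  .mk ((htpyQ K A).obj (DGMod.coproduct X)) fun j => (htpyQ K A).map (DGMod.coproductι X j)

/-- The product of dg modules as a fan in the homotopy category. -/
abbrev productFan : Limits.Fan fun j => (htpyQ K A).obj (X j) :=
  .mk ((htpyQ K A).obj (DGMod.product X)) fun j => (htpyQ K A).map (DGMod.productπ X j)

lemma nonempty_isColimit_coproductCofan : Nonempty (Limits.IsColimit (coproductCofan X)) := by
  have exists_lift (s : Limits.Cofan fun j => (htpyQ K A).obj (X j)) :
      ∃ f : (coproductCofan X).pt ⟶ s.pt, ∀ j, (coproductCofan X).inj j ≫ f = s.inj j := by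
    choose g hg using fun j => (htpyQ K A).map_surjective (Y := s.pt.as) (s.inj j)
    exact ⟨(htpyQ K A).map (DGMod.coproductDesc g), fun j =>
      (congrArg (htpyQ K A).map (coproductι_comp_coproductDesc X g j)).trans (hg j)⟩
  choose lift fac using exists_lift
  refine ⟨Limits.Cofan.IsColimit.mk _ lift fac fun s m hm => ?_⟩
  rw [← sub_eq_zero]
  obtain ⟨h, hh⟩ := (htpyQ K A).map_surjective (X := DGMod.coproduct X) (Y := s.pt.as) (m - lift s)
  refine hh.symm.trans (htpyQ_map_eq_zero_iff.2 (isNullHomotopic_of_coproductι fun j =>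
    htpyQ_map_eq_zero_iff.1 ?_))
  rw [(htpyQ K A).map_comp, hh]
  exact (Preadditive.comp_sub _ _ _).trans (sub_eq_zero.2 ((hm j).trans (fac s j).symm))

lemma nonempty_isLimit_productFan : Nonempty (Limits.IsLimit (productFan X)) := by
  have exists_lift (s : Limits.Fan fun j => (htpyQ K A).obj (X j)) :
      ∃ f : s.pt ⟶ (productFan X).pt, ∀ j, f ≫ (productFan X).proj j = s.proj j := by
    choose g hg using fun j => (htpyQ K A).map_surjective (X := s.pt.as) (s.proj j)
    exact ⟨(htpyQ K A).map (DGMod.productLift g), fun j =>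
      (congrArg (htpyQ K A).map (productLift_comp_productπ X g j)).trans (hg j)⟩
  choose lift fac using exists_lift
  refine ⟨Limits.Fan.IsLimit.mk _ lift fac fun s m hm => ?_⟩
  rw [← sub_eq_zero]
  obtain ⟨h, hh⟩ := (htpyQ K A).map_surjective (X := s.pt.as) (Y := DGMod.product X) (m - lift s)
  refine hh.symm.trans (htpyQ_map_eq_zero_iff.2 (isNullHomotopic_of_productπ fun j =>
    htpyQ_map_eq_zero_iff.1 ?_))
  rw [(htpyQ K A).map_comp, hh]
  exact (Preadditive.sub_comp _ _ _).trans (sub_eq_zero.2 ((hm j).trans (fac s j).symm))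

end Coproduct

variable (M : DGModCat K A)

lemma exists_isGhost_trW_leftOrthogonal :
    ∃ (N : DGModCat K A) (u : M ⟶ N), IsGhost u ∧
      (acyclic A).leftOrthogonal.trW ((htpyQ K A).map u) := by
  obtain ⟨P, f, hP, hf⟩ := exists_isHtpyProj_isGhost_toCone M
  exact ⟨f.cone, f.toCone, hf, ObjectProperty.trW.mk' _ (coneTriangle_distinguished f)
    (isHtpyProj_iff_leftOrthogonal.1 hP)⟩

lemma exists_isGhost_trW_rightOrthogonal :
    ∃ (N : DGModCat K A) (u : N ⟶ M), IsGhost u ∧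
      (acyclic A).rightOrthogonal.trW ((htpyQ K A).map u) := by
  obtain ⟨I, f, hI, hf⟩ := exists_isHtpyInj_isGhost_fromCone M
  let v : (CMap.cone f : DGModCat K A) ⟶ M⟦(1 : ℤ)⟧ := f.fromCone
  have trW_v : (acyclic A).rightOrthogonal.trW ((htpyQ K A).map v) :=
    (MorphismProperty.cancel_right_of_respectsIso _ _
      (((htpyQ K A).commShiftIso (1 : ℤ)).hom.app M)).1
      (ObjectProperty.trW.mk' _ (rot_of_distTriang _ (coneTriangle_distinguished f))
        (isHtpyInj_iff_rightOrthogonal.1 hI))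
  refine ⟨_, v⟦(-1 : ℤ)⟧' ≫ (shiftShiftNeg (C := DGModCat K A) M (1 : ℤ)).hom,
    IsGhost.comp_right (IsGhost.shift hf (-1)) _, ?_⟩
  rw [(htpyQ K A).map_comp]
  exact (MorphismProperty.cancel_right_of_respectsIso _ _ _).2
    ((MorphismProperty.arrow_mk_iso_iff _
      (Arrow.isoOfNatIso ((htpyQ K A).commShiftIso (-1 : ℤ)) (Arrow.mk v))).2 (trW_v.shift (-1)))

variable {X : ℕ → DGModCat K A}

/-- The telescope map `1 - s` of a sequence, `s` being induced by the transition maps `u`; its cone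
is the homotopy colimit of the sequence. -/
abbrev telescope (u : ∀ n, X n ⟶ X (n + 1)) :
    (DGMod.coproduct X : DGModCat K A) ⟶ DGMod.coproduct X :=
  𝟙 (DGMod.coproduct X : DGModCat K A) -
    DGMod.coproductDesc fun n => (u n ≫ DGMod.coproductι X (n + 1) : X n ⟶ DGMod.coproduct X)

/-- The telescope map `1 - s` of an inverse sequence, `s` being induced by the transition maps `u`;
its desuspended cone is the homotopy limit of the sequence. -/
abbrev cotelescope (u : ∀ n, X (n + 1) ⟶ X n) :
    (DGMod.product X : DGModCat K A) ⟶ DGMod.product X :=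
  𝟙 (DGMod.product X : DGModCat K A) -
    DGMod.productLift fun n =>
      CategoryStruct.comp (obj := DGModCat K A) (DGMod.productπ X (n + 1)) (u n)

lemma coproductι_comp_telescope (u : ∀ n, X n ⟶ X (n + 1)) (n : ℕ) :
    CategoryStruct.comp (obj := DGModCat K A) (DGMod.coproductι X n) (telescope u) =
      DGMod.coproductι X n - u n ≫ DGMod.coproductι X (n + 1) := by
  rw [Preadditive.comp_sub, coproductι_comp_coproductDesc, Category.comp_id]

lemma cotelescope_comp_productπ (u : ∀ n, X (n + 1) ⟶ X n) (n : ℕ) :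
    CategoryStruct.comp (obj := DGModCat K A) (cotelescope u) (DGMod.productπ X n) =
      DGMod.productπ X n - DGMod.productπ X (n + 1) ≫ u n := by
  rw [Preadditive.sub_comp, productLift_comp_productπ, Category.id_comp]

lemma acyclic_cone_telescope {u : ∀ n, X n ⟶ X (n + 1)} (hu : ∀ n, IsGhost (u n)) :
    acyclic A ((htpyQ K A).obj (CMap.cone (telescope u))) :=
  (isAcyclic_cone_iff _).2
    (IsGhost.isQis_id_sub (.coproductDesc fun n => (hu n).comp_right _))

lemma acyclic_cone_cotelescope {u : ∀ n, X (n + 1) ⟶ X n} (hu : ∀ n, IsGhost (u n)) :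
    acyclic A ((htpyQ K A).obj (CMap.cone (cotelescope u))) :=
  (isAcyclic_cone_iff _).2
    (IsGhost.isQis_id_sub (.productLift fun n => (hu n).comp_left _))

lemma exists_leftOrthogonal_trW_of_isGhost {u : ∀ n, X n ⟶ X (n + 1)} (hu : ∀ n, IsGhost (u n))
    (hu' : ∀ n, (acyclic A).leftOrthogonal.trW ((htpyQ K A).map (u n))) :
    ∃ (P : HtpyCat K A) (f : P ⟶ (htpyQ K A).obj (X 0)),
      (acyclic A).leftOrthogonal P ∧ (acyclic A).trW f := by
  obtain ⟨hc⟩ := nonempty_isColimit_coproductCofan X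
  have hφ (n : ℕ) : (coproductCofan X).inj n ≫ (htpyQ K A).map (telescope u) =
      (coproductCofan X).inj n - (htpyQ K A).map (u n) ≫ (coproductCofan X).inj (n + 1) :=
    (congrArg (htpyQ K A).map (coproductι_comp_telescope u n)).trans ((htpyQ K A).map_sub)
  exact exists_leftOrthogonal_trW_of_telescope (P := acyclic A) hc hφ
    (fun n => trW_leftOrthogonal_eq_isLocal (P := acyclic A) ▸ hu' n)
    (coneTriangle_distinguished (telescope u)) (acyclic_cone_telescope hu)

lemma exists_rightOrthogonal_trW_of_isGhost {u : ∀ n, X (n + 1) ⟶ X n} (hu : ∀ n, IsGhost (u n))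
    (hu' : ∀ n, (acyclic A).rightOrthogonal.trW ((htpyQ K A).map (u n))) :
    ∃ (I : HtpyCat K A) (f : (htpyQ K A).obj (X 0) ⟶ I),
      (acyclic A).rightOrthogonal I ∧ (acyclic A).trW f := by
  obtain ⟨hc⟩ := nonempty_isLimit_productFan X
  have hφ (n : ℕ) : (htpyQ K A).map (cotelescope u) ≫ (productFan X).proj n =
      (productFan X).proj n - (productFan X).proj (n + 1) ≫ (htpyQ K A).map (u n) :=
    (congrArg (htpyQ K A).map (cotelescope_comp_productπ u n)).trans ((htpyQ K A).map_sub)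
  exact exists_rightOrthogonal_trW_of_telescope (P := acyclic A) hc hφ
    (fun n => trW_rightOrthogonal_eq_isColocal (P := acyclic A) ▸ hu' n)
    (coneTriangle_distinguished (cotelescope u)) (acyclic_cone_cotelescope hu)

lemma exists_leftOrthogonal_trW (M : HtpyCat K A) :
    ∃ (P : HtpyCat K A) (f : P ⟶ M), (acyclic A).leftOrthogonal P ∧ (acyclic A).trW f := by
  choose next u u_ghost u_trW using exists_isGhost_trW_leftOrthogonal (A := A)
  exact exists_leftOrthogonal_trW_of_isGhost (X := Nat.rec M.as fun _ => next)
    (fun _ => u_ghost _) fun _ => u_trW _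

lemma exists_rightOrthogonal_trW (M : HtpyCat K A) :
    ∃ (I : HtpyCat K A) (f : M ⟶ I), (acyclic A).rightOrthogonal I ∧ (acyclic A).trW f := by
  choose next u u_ghost u_trW using exists_isGhost_trW_rightOrthogonal (A := A)
  exact exists_rightOrthogonal_trW_of_isGhost (X := Nat.rec M.as fun _ => next)
    (fun _ => u_ghost _) fun _ => u_trW _

end Resolutions

lemma nonempty_shiftWitness (M : HtpyCat K A) : Nonempty (ShiftWitness M.as (M⟦(1 : ℤ)⟧).as) := by
  have as_shift : (M⟦(1 : ℤ)⟧).as = M.as.shift 1 :=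
    congrArg Quotient.as (Quotient.functor_obj_shift (htpyRel K A) ℤ M.as (1 : ℤ))
  rw [as_shift]
  exact ⟨{
    eqv := LinearEquiv.refl K _
    deg _ _ := Iff.rfl
    act _ _ := rfl
    d x := by simp [sgn_one] }⟩

/-- The canonical localization functor
`q : H(A) → D(A)` from the homotopy category to the derived category has both a
left adjoint `Π` and a right adjoint `Υ`, both triangulated and fully faithful;
the essential image of `Π` consists of homotopically projective dg modules and
the essential image of `Υ` consists of homotopically injective dg modules. -/
theorem localization_has_triangulated_adjoints {K : Type} [CommRing K]
    (A : DGAlgebra K) : Nonempty (ResolutionAdjointsWitness K A) := by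
  have := isRightAdjoint_of_exists_trW (P := acyclic A) (derQ K A) exists_leftOrthogonal_trW
  have := isLeftAdjoint_of_exists_trW (P := acyclic A) (derQ K A) exists_rightOrthogonal_trW
  let adjPi := Adjunction.ofIsRightAdjoint (derQ K A)
  let adjUps := Adjunction.ofIsLeftAdjoint (derQ K A)
  let csPi := adjPi.leftAdjointCommShift ℤ
  let csUps := adjUps.rightAdjointCommShift ℤ
  have := adjPi.commShift_of_rightAdjoint ℤ
  have := adjUps.commShift_of_leftAdjoint ℤ
  have := isIso_unit_of_isLocalization_trW (P := acyclic A) adjPi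
  have := isIso_counit_of_isLocalization_trW (P := acyclic A) adjUps
  exact ⟨{
    shift_obj := nonempty_shiftWitness
    distH_of_conflation _ _ := exists_distinguished_of_isConflation
    distD_char := distinguished_derivedCat_iff
    Pi := _, adjPi, csPi
    trPi := adjPi.isTriangulated_leftAdjoint
    fullPi := adjPi.fullyFaithfulLOfIsIsoUnit.full
    faithfulPi := adjPi.fullyFaithfulLOfIsIsoUnit.faithful
    imagePi Y := isHtpyProj_iff_leftOrthogonal.2 (leftOrthogonal_obj_of_adjunction adjPi Y)
    Ups := _, adjUps, csUps
    trUps := adjUps.isTriangulated_rightAdjoint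
    fullUps := adjUps.fullyFaithfulROfIsIsoCounit.full
    faithfulUps := adjUps.fullyFaithfulROfIsIsoCounit.faithful
    imageUps Y := isHtpyInj_iff_rightOrthogonal.2 (rightOrthogonal_obj_of_adjunction adjUps Y) }⟩

end
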